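/- Let n ≥ 2, k ≥ 1, let z ∈ ℂ, and let x ∈ ℂ^k have nonzero, pairwise distinct entries and satisfy the Bethe Ansatz equations x_i^{n+k} = (−1)^{k−1} z·(x_1⋯x_k) for all i. Then, with the hopping operators a_i on H_k defined using this z, the Bethe vector b(x) is a simultaneous eigenvector: e_r(𝒜)·b(x) = h_r(x)·b(x) for every 1 ≤ r ≤ n−1, and consequently s_λ(𝒜)·b(x) = s_{λ^t}(x)·b(x) for every partition λ ∈ 𝔓_{≤n−1,k}. -/

import Mathlib

noncomputable section

open scoped BigOperators

/-- `𝔓_{≤r,c}`: partitions with at most `r` parts, each part at most `c`,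
encoded as weakly decreasing functions `Fin r → Fin (c+1)`. -/
abbrev PartBox (r c : ℕ) :=
  {f : Fin r → Fin (c + 1) // ∀ i j : Fin r, i ≤ j → (f j : ℕ) ≤ (f i : ℕ)}

/-- The parts of a partition, as natural numbers. -/
def partVal {r c : ℕ} (σ : PartBox r c) (i : Fin r) : ℕ := (σ.1 i : ℕ)

/-- `|σ|`, the number of boxes of the partition. -/
def partSum {r c : ℕ} (σ : PartBox r c) : ℕ := ∑ i, partVal σ i

/-- A tuple of parts, padded by zeros to an arbitrary length. -/
def padded {r : ℕ} (f : Fin r → ℕ) (t : ℕ) : ℕ := if h : t < r then f ⟨t, h⟩ else 0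

/-- The transpose (conjugate) partition of `μ`, with `c` parts:
`(transpGen μ c) j = μ^t_{j+1} = #{i | μ_i ≥ j+1}`. -/
def transpGen {r : ℕ} (μ : Fin r → ℕ) (c : ℕ) : Fin c → ℕ :=
  fun j => (Finset.univ.filter fun i : Fin r => (j : ℕ) + 1 ≤ μ i).card

/-- `I^{(m)}(τ)_j = (m+1)/2 + τ_{m+1-j} - (m+1-j)` (1-based `j`), as a rational number. -/
def Imap (m : ℕ) (τ : Fin m → ℕ) (j : Fin m) : ℚ :=
  ((m : ℚ) + 1) / 2 + (τ j.rev : ℚ) - ((m : ℚ) - (j : ℚ))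

/-- `ζ^t = exp(2πι t/N)` for rational exponents `t`. -/
def zeta (N : ℕ) (t : ℚ) : ℂ :=
  Complex.exp (2 * Real.pi * Complex.I * (t : ℂ) / (N : ℂ))

/-- Complete homogeneous symmetric polynomial `h_r(x)` of a tuple of complex numbers,
with `h_0 = 1` and `h_r = 0` for `r < 0`. -/
def hC {m : ℕ} (x : Fin m → ℂ) (r : ℤ) : ℂ :=
  if 0 ≤ r then
    ∑ p ∈ (Fintype.piFinset fun _ : Fin m => Finset.range (r.toNat + 1)).filter
        (fun p => ∑ i, p i = r.toNat),
      ∏ i, x i ^ p i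
  else 0

/-- The Schur polynomial `s_λ(x) = det(h_{λ_i - i + j}(x))_{1 ≤ i,j ≤ m}` of a partition
with at most `m` parts, evaluated at an `m`-tuple of complex numbers. -/
def schurC {m : ℕ} (x : Fin m → ℂ) (lam : Fin m → ℕ) : ℂ :=
  (Matrix.of fun i j : Fin m => hC x ((lam i : ℤ) - (i : ℕ) + (j : ℕ))).det

/-- A canonical "gap" of a proper subset `I ⊊ ℤ/nℤ`: the element of the complement with
the smallest representative. -/
def zgap {n : ℕ} [NeZero n] (I : Finset (ZMod n)) : ZMod n :=
  if h : ((Finset.univ \ I).image ZMod.val).Nonempty then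
    ((((Finset.univ \ I).image ZMod.val).min' h : ℕ) : ZMod n)
  else 0

/-- The cyclically ordered product `∏_{i ∈ I} a_i` in which, whenever `i, i+1 ∈ I`, the
factor `a_{i+1}` stands to the left of the factor `a_i`. -/
def cycProdDesc {n : ℕ} [NeZero n] {A : Type*} [Monoid A] (a : ZMod n → A)
    (I : Finset (ZMod n)) : A :=
  ((List.range n).map fun t =>
    if zgap I - 1 - (t : ZMod n) ∈ I then a (zgap I - 1 - (t : ZMod n)) else 1).prod

/-- The determinant of a square matrix over a (possibly noncommutative) ring, expanded via
the Leibniz formula, the factors of each summand multiplied in the order of the columns. -/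
def ncDet {A : Type*} [Ring A] {r : ℕ} (M : Fin r → Fin r → A) : A :=
  ∑ σ : Equiv.Perm (Fin r),
    ((Equiv.Perm.sign σ : ℤ) : A) * ((List.finRange r).map fun i => M (σ i) i).prod

/-- The `k`-particle space `H_k`, the free `R`-module with basis `𝔓_{≤ n-1,k}`
(a partition `λ` is identified with the level-`k` configuration `m(λ)`). -/
abbrev HkSp (R : Type*) [CommRing R] (n k : ℕ) := PartBox (n - 1) k →₀ R

/-- The configuration `m(λ)` on `ℤ/nℤ` attached to a partition `λ ∈ 𝔓_{≤ n-1,k}`: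
`m(λ)_i = λ_i - λ_{i+1}` for `1 ≤ i ≤ n-1` and `m(λ)_0 = k - λ_1`. -/
def cfgOf (n k : ℕ) (σ : PartBox (n - 1) k) (c : ZMod n) : ℕ :=
  if c.val = 0 then k - padded (partVal σ) 0
  else padded (partVal σ) (c.val - 1) - padded (partVal σ) (c.val)

/-- The basis vector of `H_k` labelled by a configuration `m` (zero if `m` is not the
configuration of a partition in the box), with coefficient `r`. -/
def toBasis (R : Type*) [CommRing R] (n k : ℕ) [NeZero n] (m : ZMod n → ℕ) (r : R) :
    HkSp R n k :=
  ∑ μ : PartBox (n - 1) k, if cfgOf n k μ = m then Finsupp.single μ r else 0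

/-- The hopping operator `a_i` on `H_k`: move one particle from site `i` to site `i+1`
(zero if site `i` is unoccupied), with the extra factor `z` when `i = 0`. -/
def aOp (R : Type*) [CommRing R] (n k : ℕ) [NeZero n] (z : R) (i : ZMod n) :
    Module.End R (HkSp R n k) :=
  Finsupp.lift (HkSp R n k) R (PartBox (n - 1) k) fun σ =>
    if cfgOf n k σ i = 0 then 0
    else
      toBasis R n k
        (fun c => cfgOf n k σ c - (Pi.single i 1 : ZMod n → ℕ) c +
          (Pi.single (i + 1) 1 : ZMod n → ℕ) c)
        (if i = 0 then z else 1)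

/-- The noncommutative elementary symmetric polynomials `e_t(𝒜)` in the hopping operators,
with the conventions `e_0 = id`, `e_n = z • id` and `e_t = 0` for `t < 0` or `t > n`. -/
def eAInt (R : Type*) [CommRing R] (n k : ℕ) [NeZero n] (z : R) (t : ℤ) :
    Module.End R (HkSp R n k) :=
  if t = 0 then 1
  else if 1 ≤ t ∧ t ≤ (n : ℤ) - 1 then
    ∑ I ∈ Finset.powersetCard t.toNat (Finset.univ : Finset (ZMod n)),
      cycProdDesc (aOp R n k z) I
  else if t = (n : ℤ) then z • (1 : Module.End R (HkSp R n k)) else 0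

/-- The noncommutative Schur polynomial
`s_λ(𝒜) = det(e_{λ^t_i - i + j}(𝒜))_{1 ≤ i,j ≤ λ_1}`. -/
def sAOp (R : Type*) [CommRing R] (n k : ℕ) [NeZero n] (z : R) (σ : PartBox (n - 1) k) :
    Module.End R (HkSp R n k) :=
  ncDet fun i j : Fin (padded (partVal σ) 0) =>
    eAInt R n k z
      ((transpGen (partVal σ) (padded (partVal σ) 0) i : ℤ) - ((i : ℕ) : ℤ) + ((j : ℕ) : ℤ))

/-- The padded partition `λ̂ = (λ_1 + m_0, …, λ_{n-1} + m_0, m_0)` with `m_0 = k - λ_1`. -/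
def lamHat (n k : ℕ) (σ : PartBox (n - 1) k) (i : Fin n) : ℕ :=
  padded (partVal σ) i + (k - padded (partVal σ) 0)

/-- The Bethe vector `b(x) = Σ_λ s_{λ̂^t}(x₁⁻¹, …, x_k⁻¹) · m(λ) ∈ H_k`. -/
def betheVec (n k : ℕ) (x : Fin k → ℂ) : HkSp ℂ n k :=
  ∑ σ : PartBox (n - 1) k,
    Finsupp.single σ (schurC (fun i => (x i)⁻¹) (transpGen (lamHat n k σ) k))

/-- The Hermitian inner product on `H_k` (conjugate-linear in the first argument) making
the basis of partitions/configurations orthonormal. -/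
def pairHk {n k : ℕ} (f g : HkSp ℂ n k) : ℂ :=
  ∑ σ : PartBox (n - 1) k, (starRingEnd ℂ) (f σ) * g σ


/-! ### Part 1: generating functions and alternants -/

theorem hC_nat {m : ℕ} (x : Fin m → ℂ) (r : ℕ) :
    hC x (r : ℤ) = PowerSeries.coeff r (∏ j, PowerSeries.mk fun p => x j ^ p) := by
  classical
  rw [PowerSeries.coeff_prod, hC, if_pos (by positivity)]
  simp only [Int.toNat_natCast, PowerSeries.coeff_mk]
  symm
  refine Finset.sum_bij (fun l _ => (l : Fin m → ℕ)) ?_ ?_ ?_ ?_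
  · intro l hl
    rw [Finset.mem_finsuppAntidiag] at hl
    simp only [Finset.mem_filter, Fintype.mem_piFinset, Finset.mem_range]
    refine ⟨fun a => ?_, hl.1⟩
    have := Finset.single_le_sum (f := fun i => l i) (fun i _ => Nat.zero_le _) (Finset.mem_univ a)
    have h2 : ∑ i, l i = r := hl.1
    omega
  · intro l _ l' _ h
    exact DFunLike.coe_injective h
  · intro p hp
    simp only [Finset.mem_filter, Fintype.mem_piFinset, Finset.mem_range] at hp
    refine ⟨Finsupp.equivFunOnFinite.symm p, ?_, ?_⟩
    · rw [Finset.mem_finsuppAntidiag]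
      refine ⟨?_, Finset.subset_univ _⟩
      simpa using hp.2
    · simp
  · intro l _
    rfl

theorem geom_mul (a : ℂ) :
    (PowerSeries.mk fun p => a ^ p) * (1 - PowerSeries.C a * PowerSeries.X) = 1 := by
  ext r
  rw [mul_sub, mul_one, ← mul_assoc, map_sub]
  cases r with
  | zero => simp
  | succ r =>
    rw [PowerSeries.coeff_succ_mul_X]
    simp [PowerSeries.coeff_one, pow_succ]

def Hps {m : ℕ} (x : Fin m → ℂ) : PowerSeries ℂ := ∏ j, PowerSeries.mk fun p => x j ^ p

theorem Hps_mul {m : ℕ} (x : Fin m → ℂ) :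
    Hps x * ∏ j, (1 - PowerSeries.C (x j) * PowerSeries.X) = 1 := by
  rw [Hps, ← Finset.prod_mul_distrib]
  exact Finset.prod_eq_one fun j _ => geom_mul _

theorem hC_neg {m : ℕ} (x : Fin m → ℂ) (r : ℤ) (hr : r < 0) : hC x r = 0 := by
  rw [hC, if_neg (by omega)]

theorem hC_zero {m : ℕ} (x : Fin m → ℂ) : hC x 0 = 1 := by
  have := hC_nat x 0
  simp only [Nat.cast_zero] at this
  rw [this, PowerSeries.coeff_zero_eq_constantCoeff_apply, map_prod]
  exact Finset.prod_eq_one fun j _ => by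
    rw [← PowerSeries.coeff_zero_eq_constantCoeff_apply]; simp

def qpol {k : ℕ} (y : Fin k → ℂ) (l : Fin k) : Polynomial ℂ :=
  ∏ a ∈ Finset.univ.erase l, (1 - Polynomial.C (y a) * Polynomial.X)

theorem qpol_coeff {k : ℕ} (y : Fin k → ℂ) (l : Fin k) (b : ℕ) (hb : k ≤ b) :
    (qpol y l).coeff b = 0 := by
  apply Polynomial.coeff_eq_zero_of_natDegree_lt
  have h1 : (qpol y l).natDegree ≤ ∑ a ∈ Finset.univ.erase l, 1 := by
    refine (Polynomial.natDegree_prod_le _ _).trans (Finset.sum_le_sum fun a _ => ?_)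
    compute_degree
  have h2 := l.pos
  simp [Finset.card_erase_of_mem] at h1
  omega

theorem Hps_qpol {k : ℕ} (y : Fin k → ℂ) (l : Fin k) :
    Hps y * (qpol y l : PowerSeries ℂ) = PowerSeries.mk fun p => y l ^ p := by
  have h1 : (qpol y l : PowerSeries ℂ) =
      ∏ a ∈ Finset.univ.erase l, (1 - PowerSeries.C (y a) * PowerSeries.X) := by
    have : (qpol y l : PowerSeries ℂ) = Polynomial.coeToPowerSeries.ringHom (qpol y l) := by simp
    rw [this, qpol, map_prod]
    simp
  rw [h1, Hps, ← Finset.mul_prod_erase Finset.univ _ (Finset.mem_univ l), mul_assoc,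
    ← Finset.prod_mul_distrib, Finset.prod_eq_one (fun j _ => geom_mul (y j)), mul_one]

theorem pow_eq_sum {k : ℕ} (y : Fin k → ℂ) (l : Fin k) (m : ℕ) :
    y l ^ m = ∑ j : Fin k, hC y ((m : ℤ) - (k - 1) + (j : ℕ)) *
      (qpol y l).coeff (k - 1 - j) := by
  have h0 : y l ^ m = PowerSeries.coeff m (Hps y * (qpol y l : PowerSeries ℂ)) := by
    rw [Hps_qpol]; simp
  rw [h0, mul_comm, PowerSeries.coeff_mul, Finset.Nat.sum_antidiagonal_eq_sum_range_succ_mk]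
  have h1 : ∀ b ∈ Finset.range (m + 1), (PowerSeries.coeff b (qpol y l : PowerSeries ℂ)) *
      PowerSeries.coeff (m - b) (Hps y) = (qpol y l).coeff b * hC y ((m : ℤ) - b) := by
    intro b hb
    rw [Finset.mem_range] at hb
    have : ((m : ℤ) - b) = ((m - b : ℕ) : ℤ) := by omega
    rw [this, hC_nat]
    simp [Hps]
  rw [Finset.sum_congr rfl h1]
  have h2 : ∑ b ∈ Finset.range (m + 1), (qpol y l).coeff b * hC y ((m : ℤ) - b) =
      ∑ b ∈ Finset.range (m + 1 + k), (qpol y l).coeff b * hC y ((m : ℤ) - b) := by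
    apply Finset.sum_subset
    · intro b; simp only [Finset.mem_range]; omega
    · intro b _ hb
      rw [Finset.mem_range] at hb
      rw [hC_neg _ _ (by omega), mul_zero]
  have h3 : ∑ b ∈ Finset.range k, (qpol y l).coeff b * hC y ((m : ℤ) - b) =
      ∑ b ∈ Finset.range (m + 1 + k), (qpol y l).coeff b * hC y ((m : ℤ) - b) := by
    apply Finset.sum_subset
    · intro b; simp only [Finset.mem_range]; omega
    · intro b _ hb
      rw [Finset.mem_range] at hb
      rw [qpol_coeff _ _ _ (by omega), zero_mul]
  rw [h2, ← h3, ← Finset.sum_range_reflect, Finset.sum_range]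
  refine Finset.sum_congr rfl fun j _ => ?_
  rw [mul_comm]
  congr 2
  have := j.2
  omega

/-- The alternant `det (x_j ^ (-(Q_i + i)))`. -/
def altA {k : ℕ} (x : Fin k → ℂ) (Q : Fin k → ℤ) : ℂ :=
  (Matrix.of fun i j : Fin k => x j ^ (-(Q i + (i : ℕ)))).det

theorem schur_alt {k : ℕ} (x : Fin k → ℂ) (hxd : Function.Injective x) :
    ∃ κ : ℂ, κ ≠ 0 ∧ ∀ lam : Fin k → ℕ,
      altA x (fun i => (lam i.rev : ℤ)) = κ * schurC (fun i => (x i)⁻¹) lam := by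
  set y : Fin k → ℂ := fun i => (x i)⁻¹ with hy
  set E : Matrix (Fin k) (Fin k) ℂ := Matrix.of fun j l => (qpol y l).coeff (k - 1 - j) with hE
  have key : ∀ lam : Fin k → ℕ,
      altA x (fun i => (lam i.rev : ℤ)) =
        (Equiv.Perm.sign (Fin.revPerm : Equiv.Perm (Fin k)) : ℤ) * (schurC y lam * E.det) := by
    intro lam
    rw [schurC, ← Matrix.det_mul, ← Matrix.det_permute, altA]
    congr 1
    ext i l
    simp only [Matrix.of_apply, Matrix.submatrix_apply, id, Matrix.mul_apply, hE]
    have h := pow_eq_sum y l (lam i.rev + i)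
    have h2 : x l ^ (-((lam i.rev : ℤ) + (i : ℕ))) = y l ^ (lam i.rev + i : ℕ) := by
      rw [zpow_neg, hy, inv_pow]; norm_cast
    rw [h2, h]
    refine Finset.sum_congr rfl fun j _ => ?_
    congr 2
    simp only [Fin.revPerm_apply, Fin.val_rev]
    have := i.2
    push_cast
    omega
  refine ⟨((Equiv.Perm.sign (Fin.revPerm : Equiv.Perm (Fin k)) : ℤ) : ℂ) * E.det, ?_, ?_⟩
  · have h0 := key (fun _ => 0)
    have h1 : altA x (fun i => ((fun _ => 0 : Fin k → ℕ) i.rev : ℤ)) ≠ 0 := by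
      have : (Matrix.vandermonde y).det ≠ 0 := by
        rw [Matrix.det_vandermonde_ne_zero_iff]
        exact fun a b h => hxd (inv_injective h)
      rw [← Matrix.det_transpose] at this
      convert this using 1
      rw [altA]
      congr 1
      ext i j
      simp [Matrix.vandermonde_apply, hy]
    rw [h0] at h1
    intro h
    apply h1
    linear_combination (schurC y fun _ => 0) * h
  · intro lam
    rw [key]; ring

theorem det_cyc {R : Type*} [CommRing R] {K : ℕ} (W : Matrix (Fin (K + 1)) (Fin (K + 1)) R)
    (u : Fin (K + 1) → R) (B : Matrix (Fin (K + 1)) (Fin (K + 1)) R)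
    (h0 : ∀ j, B 0 j = W 0 j - u 0 * W (Fin.last K) j)
    (hs : ∀ (i : Fin K) j, B i.succ j = W i.succ j - u i.succ * W i.castSucc j) :
    B.det = (1 - ∏ i, u i) * W.det := by
  set v : Fin (K + 1) → R := fun i => ∏ a ∈ Finset.Iic i, u a with hv
  have hv0 : v 0 = u 0 := by
    have : Finset.Iic (0 : Fin (K + 1)) = {0} := by ext a; simp
    simp [hv, this]
  have hvs : ∀ i : Fin K, v i.succ = u i.succ * v i.castSucc := by
    intro i
    have : Finset.Iic i.succ = insert i.succ (Finset.Iic i.castSucc) := by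
      ext a; simp [Fin.le_def, Fin.ext_iff]; omega
    simp only [hv, this]
    rw [Finset.prod_insert (by simp [Fin.le_def])]
  have hvl : v (Fin.last K) = ∏ i, u i := by
    have : Finset.Iic (Fin.last K) = Finset.univ := by ext a; simp [Fin.le_last]
    simp [hv, this]
  set A : Matrix (Fin (K + 1)) (Fin (K + 1)) R :=
    Matrix.of fun i j => W i j - v i * W (Fin.last K) j with hA
  have h1 : A.det = B.det := by
    refine Matrix.det_eq_of_forall_row_eq_smul_add_pred (fun i => u i.succ) ?_ ?_
    · intro j; simp [hA, h0, hv0]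
    · intro i j; simp [hA, hs, hvs]; ring
  have h2 : A = A.updateRow (Fin.last K) ((1 - ∏ i, u i) • W (Fin.last K)) := by
    ext i j
    by_cases h : i = Fin.last K
    · subst h
      simp [hA, hvl]; ring
    · simp [Matrix.updateRow_ne h]
  rw [← h1, h2, Matrix.det_updateRow_smul]
  congr 1
  refine Matrix.det_eq_of_forall_row_eq_smul_add_const
    (fun i => if i = Fin.last K then 0 else - v i) (Fin.last K) (by simp) ?_
  intro i j
  by_cases h : i = Fin.last K
  · subst h
    simp
  · simp [hA, h]; ring


/-! ### Part 2: the cyclic Pieri rule and quasi-periodicity -/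

def prevP {K : ℕ} (n : ℕ) (P : Fin (K + 1) → ℤ) : Fin (K + 1) → ℤ :=
  Fin.cons (P (Fin.last K) - n) (fun i => P i.castSucc)

theorem sum_prevP {K : ℕ} (n : ℕ) (P : Fin (K + 1) → ℤ) :
    ∑ i, (P i - prevP n P i) = n := by
  rw [Finset.sum_sub_distrib, Fin.sum_univ_succ (prevP n P), Fin.sum_univ_castSucc P]
  simp only [prevP, Fin.cons_zero, Fin.cons_succ]
  ring

theorem sum_D {K : ℕ} (n : ℕ) (P : Fin (K + 1) → ℤ) (D : Fin (K + 1) → ℕ)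
    (hD : ∀ i, P i - D i = prevP n P i) : ∑ i, D i = n := by
  have h := sum_prevP n P
  have h2 : ∀ i, P i - prevP n P i = D i := fun i => by have := hD i; omega
  rw [Finset.sum_congr rfl (fun i _ => h2 i)] at h
  exact_mod_cast h

theorem geom_telescope (a : ℂ) (ha : a ≠ 0) (l : ℤ) (d : ℕ) :
    (1 - PowerSeries.C a * PowerSeries.X) *
      ∑ s ∈ Finset.range d, PowerSeries.X ^ s * PowerSeries.C (a ^ (l + s)) =
    PowerSeries.C (a ^ l) - PowerSeries.X ^ d * PowerSeries.C (a ^ (l + d)) := by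
  induction d with
  | zero => simp
  | succ d ih =>
    rw [Finset.sum_range_succ, mul_add, ih]
    have : a ^ (l + ((d + 1 : ℕ) : ℤ)) = a * a ^ (l + d) := by
      rw [← zpow_one_add₀ ha]; congr 1; push_cast; ring
    rw [this, map_mul]
    ring

theorem pieri {K : ℕ} (n : ℕ) (c : ℂ) (x : Fin (K + 1) → ℂ) (hx0 : ∀ i, x i ≠ 0)
    (hb : ∀ i, x i ^ (n + (K + 1)) = c) (P : Fin (K + 1) → ℤ) (D : Fin (K + 1) → ℕ)
    (hD : ∀ i, P i - D i = prevP n P i) (r : ℕ) (hr : r < n + (K + 1)) :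
    hC x (r : ℤ) * altA x P =
      ∑ α ∈ (Fintype.piFinset fun i => Finset.range (D i + 1)).filter (fun α => ∑ i, α i = r),
        altA x (fun i => P i - α i) := by
  set W : Matrix (Fin (K + 1)) (Fin (K + 1)) (PowerSeries ℂ) :=
    Matrix.of fun i j => PowerSeries.C (x j ^ (-(P i + (i : ℕ)))) with hW
  set R : Matrix (Fin (K + 1)) (Fin (K + 1)) (PowerSeries ℂ) :=
    fun i => ∑ s ∈ Finset.range (D i + 1), fun j =>
      PowerSeries.X ^ s * PowerSeries.C (x j ^ (-(P i + (i : ℕ)) + s)) with hR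
  set u : Fin (K + 1) → PowerSeries ℂ :=
    Fin.cons (PowerSeries.C c * PowerSeries.X ^ (D 0 + 1))
      (fun i => PowerSeries.X ^ (D i.succ + 1)) with hu
  set B : Matrix (Fin (K + 1)) (Fin (K + 1)) (PowerSeries ℂ) :=
    Matrix.of fun i j => (1 - PowerSeries.C (x j) * PowerSeries.X) * R i j with hB
  have hBe : ∀ i j, B i j = W i j - PowerSeries.X ^ (D i + 1) *
      PowerSeries.C (x j ^ (-(P i + (i : ℕ)) + ((D i + 1 : ℕ) : ℤ))) := by
    intro i j
    simp only [hB, hR, hW, Matrix.of_apply, Finset.sum_apply]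
    exact geom_telescope (x j) (hx0 j) _ _
  have hdetB : B.det = (1 - ∏ i, u i) * W.det := by
    apply det_cyc
    · intro j
      rw [hBe]
      have h1 := hD 0
      simp only [prevP, Fin.cons_zero] at h1
      have h2 : -(P 0 + ((0 : Fin (K + 1)) : ℕ)) + ((D 0 + 1 : ℕ) : ℤ) =
        ((n + (K + 1) : ℕ) : ℤ) + (-(P (Fin.last K) + ((Fin.last K : Fin (K + 1)) : ℕ))) := by
        simp; omega
      rw [h2, zpow_add₀ (hx0 j), zpow_natCast, hb]
      simp only [hu, hW, Fin.cons_zero, Matrix.of_apply, map_mul]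
      ring
    · intro i j
      rw [hBe]
      have h1 := hD i.succ
      simp only [prevP, Fin.cons_succ] at h1
      have h2 : -(P i.succ + ((i.succ : Fin (K + 1)) : ℕ)) + ((D i.succ + 1 : ℕ) : ℤ) =
        (-(P i.castSucc + ((i.castSucc : Fin (K + 1)) : ℕ))) := by
        simp; omega
      rw [h2]
      simp only [hu, hW, Fin.cons_succ, Matrix.of_apply]
  have hprodu : ∏ i, u i = PowerSeries.C c * PowerSeries.X ^ (n + (K + 1)) := by
    rw [Fin.prod_univ_succ]
    simp only [hu, Fin.cons_zero, Fin.cons_succ]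
    rw [mul_assoc]
    congr 1
    rw [← Fin.prod_univ_succ (fun i => (PowerSeries.X : PowerSeries ℂ) ^ (D i + 1)),
      Finset.prod_pow_eq_pow_sum]
    congr 1
    rw [Finset.sum_add_distrib, sum_D n P D hD]
    simp
  have hdetW : W.det = PowerSeries.C (altA x P) := by
    rw [altA, RingHom.map_det]
    rfl
  have hdetB2 : B.det = (∏ j, (1 - PowerSeries.C (x j) * PowerSeries.X)) * R.det := by
    rw [hB, ← Matrix.det_mul_row]
  have hmain : R.det = Hps x * (1 - PowerSeries.C c * PowerSeries.X ^ (n + (K + 1))) *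
      PowerSeries.C (altA x P) := by
    calc R.det = (Hps x * ∏ j, (1 - PowerSeries.C (x j) * PowerSeries.X)) * R.det := by
          rw [Hps_mul, one_mul]
      _ = _ := by rw [mul_assoc, ← hdetB2, hdetB, hprodu, hdetW]; ring
  have hRexp : R.det = ∑ α ∈ (Fintype.piFinset fun i => Finset.range (D i + 1)),
      PowerSeries.X ^ (∑ i, α i) * PowerSeries.C (altA x (fun i => P i - α i)) := by
    have h1 := (Matrix.detRowAlternating (R := PowerSeries ℂ)
      (n := Fin (K + 1))).toMultilinearMap.map_sum_finset
      (g := fun i (s : ℕ) j => PowerSeries.X ^ s * PowerSeries.C (x j ^ (-(P i + (i : ℕ)) + s)))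
      (A := fun i => Finset.range (D i + 1))
    refine h1.trans (Finset.sum_congr rfl fun α _ => ?_)
    have h2 : PowerSeries.C (altA x (fun i => P i - α i)) =
      (Matrix.of fun i j => PowerSeries.C (x j ^ (-(P i + ((i : Fin (K + 1)) : ℕ)) + α i))).det := by
      rw [altA, RingHom.map_det]
      congr 1
      ext i j : 2
      simp only [RingHom.mapMatrix_apply, Matrix.map_apply, Matrix.of_apply]
      congr 2
      ring
    rw [h2, ← Finset.prod_pow_eq_pow_sum, ← Matrix.det_mul_column]
    rfl
  have hco := congrArg (PowerSeries.coeff r) (hRexp.symm.trans hmain)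
  rw [map_sum, PowerSeries.coeff_mul_C, mul_sub, mul_one, map_sub, ← mul_assoc,
    PowerSeries.coeff_mul_X_pow', if_neg (by omega), sub_zero] at hco
  rw [hC_nat]
  change PowerSeries.coeff r (Hps x) * _ = _
  rw [← hco, Finset.sum_filter]
  refine Finset.sum_congr rfl fun α _ => ?_
  rw [PowerSeries.coeff_mul_C, PowerSeries.coeff_X_pow]
  by_cases h : ∑ i, α i = r
  · simp [h]
  · rw [if_neg h, if_neg (Ne.symm h), zero_mul]

theorem alt_rot {K : ℕ} (n : ℕ) (z : ℂ) (x : Fin (K + 1) → ℂ) (hx0 : ∀ i, x i ≠ 0)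
    (hb : ∀ i, x i ^ (n + (K + 1)) = (-1) ^ K * z * ∏ j, x j) (Q : Fin (K + 1) → ℤ) :
    z * altA x (Fin.snoc (fun i => Q i.succ) (Q 0 + n) : Fin (K + 1) → ℤ) = altA x Q := by
  set Q' : Fin (K + 1) → ℤ := Fin.snoc (fun i => Q i.succ) (Q 0 + n) with hQ'
  set c := (-1) ^ K * z * ∏ j, x j with hc
  have hX : ∏ j, x j ≠ 0 := Finset.prod_ne_zero_iff.mpr fun j _ => hx0 j
  set v : Fin (K + 1) → ℂ := Fin.snoc (fun _ => 1) c with hv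
  have hvp : ∏ i, v i = c := by
    rw [Fin.prod_univ_castSucc]; simp [hv]
  have h1 : c * altA x Q' = (∏ j, x j) * ((-1) ^ K * altA x Q) := by
    have hs : ((-1 : ℂ) ^ K) * altA x Q = ((Matrix.of fun i j : Fin (K + 1) =>
        x j ^ (-(Q i + (i : ℕ)))).submatrix (finRotate (K + 1)) id).det := by
      rw [Matrix.det_permute, sign_finRotate]
      simp [altA]
    rw [hs, ← hvp, altA, ← Matrix.det_mul_column, ← Matrix.det_mul_row]
    congr 1
    ext i j : 2
    simp only [Matrix.of_apply, Matrix.submatrix_apply, id]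
    refine Fin.lastCases ?_ (fun i => ?_) i
    · simp only [hv, hQ', Fin.snoc_last, finRotate_last]
      rw [← hb j, ← zpow_natCast, ← zpow_add₀ (hx0 j), ← zpow_one_add₀ (hx0 j)]
      congr 1
      simp
      ring
    · simp only [hv, hQ', Fin.snoc_castSucc, finRotate_apply, Fin.coeSucc_eq_succ]
      rw [one_mul, ← zpow_one_add₀ (hx0 j)]
      congr 1
      simp
      ring
  have h2 : ((-1 : ℂ) ^ K) ≠ 0 := by simp
  have h3 : ((-1 : ℂ) ^ K * ∏ j, x j) * (z * altA x Q') =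
      ((-1 : ℂ) ^ K * ∏ j, x j) * altA x Q := by
    rw [hc] at h1; linear_combination h1
  exact mul_left_cancel₀ (mul_ne_zero h2 hX) h3


/-! ### Part 3: configurations -/

theorem padded_anti {r c : ℕ} (σ : PartBox r c) {s t : ℕ} (h : s ≤ t) :
    padded (partVal σ) t ≤ padded (partVal σ) s := by
  unfold padded
  by_cases ht : t < r
  · rw [dif_pos ht, dif_pos (by omega)]
    exact σ.2 ⟨s, by omega⟩ ⟨t, ht⟩ h
  · rw [dif_neg ht]; exact Nat.zero_le _

theorem padded_le {r c : ℕ} (σ : PartBox r c) (t : ℕ) :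
    padded (partVal σ) t ≤ c := by
  unfold padded
  split_ifs with h
  · exact Nat.lt_succ_iff.mp (σ.1 ⟨t, h⟩).2
  · exact Nat.zero_le _

theorem padded_zero {r c : ℕ} (σ : PartBox r c) (t : ℕ) (h : r ≤ t) :
    padded (partVal σ) t = 0 := by
  unfold padded
  rw [dif_neg (by omega)]

theorem part_ext {r c : ℕ} (σ τ : PartBox r c)
    (h : ∀ t, t < r → padded (partVal σ) t = padded (partVal τ) t) : σ = τ := by
  apply Subtype.ext
  funext i
  apply Fin.ext
  have := h i i.2
  simpa [padded, partVal] using this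

theorem cfg_inj (n k : ℕ) [NeZero n] (σ τ : PartBox (n - 1) k)
    (h : ∀ c, cfgOf n k σ c = cfgOf n k τ c) : σ = τ := by
  apply part_ext
  have key : ∀ d t, t + d = n - 1 → padded (partVal σ) t = padded (partVal τ) t := by
    intro d
    induction d with
    | zero => intro t ht; rw [padded_zero _ _ (by omega), padded_zero _ _ (by omega)]
    | succ d ih =>
      intro t ht
      have h1 := ih (t + 1) (by omega)
      have h2 := h ((t + 1 : ℕ) : ZMod n)
      have hv : ((t + 1 : ℕ) : ZMod n).val = t + 1 := ZMod.val_cast_of_lt (by omega)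
      simp only [cfgOf, hv] at h2
      simp at h2
      have h3 := padded_anti σ (show t ≤ t + 1 by omega)
      have h4 := padded_anti τ (show t ≤ t + 1 by omega)
      omega
  intro t ht
  exact key (n - 1 - t) t (by omega)

theorem cfg_surj (n k : ℕ) [NeZero n] (m : ZMod n → ℕ) (hs : ∑ c, m c = k) :
    ∃ σ : PartBox (n - 1) k, ∀ c, cfgOf n k σ c = m c := by
  have hn : 0 < n := Nat.pos_of_ne_zero (NeZero.ne n)
  set g : ℕ → ℕ := fun t => m (t : ZMod n) with hg
  have hsum : ∑ t ∈ Finset.range n, g t = k := by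
    rw [← hs]
    refine Finset.sum_bij (fun t _ => (t : ZMod n)) (fun _ _ => Finset.mem_univ _) ?_ ?_ ?_
    · intro a ha b hb hab
      rw [Finset.mem_range] at ha hb
      have := congrArg ZMod.val hab
      rwa [ZMod.val_cast_of_lt ha, ZMod.val_cast_of_lt hb] at this
    · intro c _
      exact ⟨c.val, Finset.mem_range.mpr (ZMod.val_lt c), by simp⟩
    · intro _ _; rfl
  set L : ℕ → ℕ := fun t => ∑ c ∈ Finset.Ico (t + 1) n, g c with hL
  have hLanti : ∀ s t, s ≤ t → L t ≤ L s := fun s t h =>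
    Finset.sum_le_sum_of_subset (Finset.Ico_subset_Ico (by omega) le_rfl)
  have hL0 : g 0 + L 0 = k := by
    rw [← hsum, Finset.range_eq_Ico, Finset.sum_eq_sum_Ico_succ_bot hn]
  have hLs : ∀ t, t + 1 < n → L t = g (t + 1) + L (t + 1) := by
    intro t ht
    exact Finset.sum_eq_sum_Ico_succ_bot ht _
  have hLk : ∀ t, L t < k + 1 := fun t => by
    have := hLanti 0 t (Nat.zero_le _); omega
  refine ⟨⟨fun i => ⟨L i, hLk i⟩, fun i j hij => hLanti _ _ hij⟩, ?_⟩
  set σ : PartBox (n - 1) k := ⟨fun i => ⟨L i, hLk i⟩, fun i j hij => hLanti _ _ hij⟩ with hσ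
  have hp : ∀ t, padded (partVal σ) t = L t := by
    intro t
    by_cases h : t < n - 1
    · simp [padded, partVal, hσ, h]
    · rw [padded_zero _ _ (by omega)]
      simp only [hL]
      rw [Finset.Ico_eq_empty (by omega)]; rfl
  intro c
  have hc : g c.val = m c := by simp [hg]
  unfold cfgOf
  rw [hp, hp, hp, ← hc]
  split_ifs with h
  · rw [h]; omega
  · have h1 := hLs (c.val - 1) (by have := ZMod.val_lt c; omega)
    rw [show c.val - 1 + 1 = c.val by omega] at h1
    omega

/-- positions of the particles of `σ`, in weakly increasing order, in `{1,…,n}` -/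
def pos (n k : ℕ) (σ : PartBox (n - 1) k) (i : Fin k) : ℕ :=
  transpGen (lamHat n k σ) k i.rev

theorem lamHat_anti (n k : ℕ) (σ : PartBox (n - 1) k) {i j : Fin n} (h : i ≤ j) :
    lamHat n k σ j ≤ lamHat n k σ i := by
  unfold lamHat
  have := padded_anti σ (show (i : ℕ) ≤ j from h)
  omega

theorem card_filter_lt_of_anti {n : ℕ} (μ : Fin n → ℕ) (h : ∀ i j, i ≤ j → μ j ≤ μ i) (v : ℕ)
    (a : Fin n) : (a : ℕ) + 1 ≤ (Finset.univ.filter fun i : Fin n => v ≤ μ i).card ↔ v ≤ μ a := by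
  constructor
  · intro hc
    by_contra hv
    have : (Finset.univ.filter fun i : Fin n => v ≤ μ i) ⊆ Finset.Iio a := by
      intro i hi
      simp only [Finset.mem_filter, Finset.mem_univ, true_and, Finset.mem_Iio] at hi ⊢
      by_contra hai
      exact hv (hi.trans (h a i (not_lt.mp hai)))
    have := Finset.card_le_card this
    simp at this
    omega
  · intro hv
    have : Finset.Iic a ⊆ (Finset.univ.filter fun i : Fin n => v ≤ μ i) := by
      intro i hi
      simp only [Finset.mem_filter, Finset.mem_univ, true_and, Finset.mem_Iic] at hi ⊢
      exact hv.trans (h i a hi)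
    have := Finset.card_le_card this
    simpa using this

theorem pos_mono (n k : ℕ) (σ : PartBox (n - 1) k) {i j : Fin k} (h : i ≤ j) :
    pos n k σ i ≤ pos n k σ j := by
  unfold pos transpGen
  apply Finset.card_le_card
  intro a
  simp only [Finset.mem_filter, Finset.mem_univ, true_and, Fin.val_rev]
  have : (i : ℕ) ≤ j := h
  omega

theorem pos_le (n k : ℕ) (σ : PartBox (n - 1) k) (i : Fin k) : pos n k σ i ≤ n := by
  unfold pos transpGen
  exact (Finset.card_le_univ _).trans (by simp)

theorem le_pos_iff (n k : ℕ) (σ : PartBox (n - 1) k) (i : Fin k) (a : Fin n) :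
    (a : ℕ) + 1 ≤ pos n k σ i ↔ (i.rev : ℕ) + 1 ≤ lamHat n k σ a := by
  unfold pos transpGen
  exact card_filter_lt_of_anti _ (fun i j h => lamHat_anti n k σ h) _ _

theorem pos_ge (n k : ℕ) (hn : 1 ≤ n) (σ : PartBox (n - 1) k) (i : Fin k) :
    1 ≤ pos n k σ i := by
  have := (le_pos_iff n k σ i ⟨0, hn⟩).mpr (by
    unfold lamHat
    have := padded_le σ 0
    have := i.rev.2
    simp only
    omega)
  simpa using this

theorem card_le_pos (n k : ℕ) (σ : PartBox (n - 1) k) (a : Fin n) :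
    (Finset.univ.filter fun i : Fin k => (a : ℕ) + 1 ≤ pos n k σ i).card = lamHat n k σ a := by
  have hle : lamHat n k σ a ≤ k := by
    unfold lamHat
    have := padded_anti σ (Nat.zero_le (a : ℕ))
    have := padded_le σ 0
    omega
  have h1 : (Finset.univ.filter fun i : Fin k => (a : ℕ) + 1 ≤ pos n k σ i).card =
      (Finset.univ.filter fun i : Fin k => (i : ℕ) < lamHat n k σ a).card := by
    apply Finset.card_bij (fun i _ => i.rev)
    · intro i hi
      simp only [Finset.mem_filter, Finset.mem_univ, true_and] at hi ⊢
      exact (le_pos_iff n k σ i a).mp hi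
    · intro i _ j _ h
      exact Fin.rev_injective h
    · intro i hi
      refine ⟨i.rev, ?_, by simp⟩
      simp only [Finset.mem_filter, Finset.mem_univ, true_and] at hi ⊢
      rw [le_pos_iff]
      simpa using hi
  rw [h1, Fin.card_filter_val_lt]
  omega

/-- number of particles at the site `c` for a tuple of positions -/
def cnt (n : ℕ) {k : ℕ} (Q : Fin k → ℤ) (c : ZMod n) : ℕ :=
  (Finset.univ.filter fun i => ((Q i : ℤ) : ZMod n) = c).card

theorem cfg_eq_cnt (n k : ℕ) [NeZero n] (σ : PartBox (n - 1) k) (c : ZMod n) :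
    cfgOf n k σ c = cnt n (fun i => (pos n k σ i : ℤ)) c := by
  have hn : 0 < n := Nat.pos_of_ne_zero (NeZero.ne n)
  have hcn := ZMod.val_lt c
  -- the site as a number in 1..n
  unfold cfgOf cnt
  split_ifs with h
  · have h1 := card_le_pos n k σ ⟨n - 1, by omega⟩
    have h2 : lamHat n k σ ⟨n - 1, by omega⟩ = k - padded (partVal σ) 0 := by
      unfold lamHat
      rw [padded_zero _ _ (by simp)]; simp
    rw [← h2, ← h1]
    congr 1
    ext i
    simp only [Finset.mem_filter, Finset.mem_univ, true_and, Int.cast_natCast]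
    have hle := pos_le n k σ i
    have hge := pos_ge n k hn σ i
    have hc0 : c = 0 := (ZMod.val_eq_zero c).mp h
    rw [hc0, ZMod.natCast_eq_zero_iff]
    constructor
    · intro h'
      have : pos n k σ i = n := by omega
      rw [this]
    · intro h'
      have := Nat.le_of_dvd (by omega) h'
      omega
  · have h1 := card_le_pos n k σ ⟨c.val - 1, by omega⟩
    have h2 := card_le_pos n k σ ⟨c.val, by omega⟩
    simp only at h1 h2
    rw [show c.val - 1 + 1 = c.val by omega] at h1
    have h3 : padded (partVal σ) (c.val - 1) - padded (partVal σ) c.val =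
        lamHat n k σ ⟨c.val - 1, by omega⟩ - lamHat n k σ ⟨c.val, by omega⟩ := by
      unfold lamHat
      simp only
      omega
    rw [h3, ← h1, ← h2, ← Finset.card_sdiff_of_subset]
    · congr 1
      ext i
      simp only [Finset.mem_sdiff, Finset.mem_filter, Finset.mem_univ, true_and, Int.cast_natCast]
      have hle := pos_le n k σ i
      have hge := pos_ge n k hn σ i
      constructor
      · intro h'
        have : pos n k σ i = c.val := by omega
        rw [this]; simp
      · intro h'
        rw [← h'] at h ⊢
        rcases Nat.lt_or_ge (pos n k σ i) n with h4 | h4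
        · rw [ZMod.val_cast_of_lt h4]; omega
        · have h5 : pos n k σ i = n := by omega
          rw [h5] at h
          simp at h
    · intro i
      simp only [Finset.mem_filter, Finset.mem_univ, true_and]
      omega

theorem cnt_sum (n k : ℕ) [NeZero n] (Q : Fin k → ℤ) : ∑ c, cnt n Q c = k := by
  unfold cnt
  rw [← Finset.card_eq_sum_card_fiberwise (fun _ _ => Finset.mem_coe.mpr (Finset.mem_univ _))]
  simp

theorem cfg_sum (n k : ℕ) [NeZero n] (σ : PartBox (n - 1) k) : ∑ c, cfgOf n k σ c = k := by
  rw [Finset.sum_congr rfl fun c _ => cfg_eq_cnt n k σ c, cnt_sum]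

theorem pos_unique (n k : ℕ) [NeZero n] (Q Q' : Fin k → ℤ)
    (hQ : ∀ i, 1 ≤ Q i ∧ Q i ≤ n) (hQ' : ∀ i, 1 ≤ Q' i ∧ Q' i ≤ n)
    (hm : Monotone Q) (hm' : Monotone Q') (h : ∀ c, cnt n Q c = cnt n Q' c) : Q = Q' := by
  have hinj : ∀ a b : ℤ, 1 ≤ a ∧ a ≤ n → 1 ≤ b ∧ b ≤ n → (a : ZMod n) = (b : ZMod n) → a = b := by
    intro a b ha hb hab
    rw [ZMod.intCast_eq_intCast_iff_dvd_sub] at hab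
    obtain ⟨t, ht⟩ := hab
    have hn : (0 : ℤ) < n := by have := NeZero.pos n; omega
    have h1 : t < 1 := by nlinarith
    have h2 : -1 < t := by nlinarith
    have h3 : t = 0 := by omega
    rw [h3] at ht; omega
  have hcard : ∀ v : ℤ, (Finset.univ.filter fun i => Q i = v).card =
      (Finset.univ.filter fun i => Q' i = v).card := by
    intro v
    by_cases hv : 1 ≤ v ∧ v ≤ n
    · have h1 := h (v : ZMod n)
      unfold cnt at h1
      convert h1 using 2
      · ext i
        simp only [Finset.mem_filter, Finset.mem_univ, true_and]
        exact ⟨fun h => by rw [h], hinj _ _ (hQ i) hv⟩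
      · ext i
        simp only [Finset.mem_filter, Finset.mem_univ, true_and]
        exact ⟨fun h => by rw [h], hinj _ _ (hQ' i) hv⟩
    · rw [Finset.filter_false_of_mem, Finset.filter_false_of_mem]
      · intro i _ h; exact hv (h ▸ hQ' i)
      · intro i _ h; exact hv (h ▸ hQ i)
  have hperm : (List.ofFn Q).Perm (List.ofFn Q') := by
    rw [List.perm_iff_count]
    intro v
    have hc : ∀ F : Fin k → ℤ, (List.ofFn F).count v = (Finset.univ.filter fun i => F i = v).card := by
      intro F
      rw [← Multiset.coe_count, ← Fin.univ_val_map, Multiset.count_map]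
      simp only [eq_comm (a := v)]
      rfl
    rw [hc, hc, hcard]
  have := hperm.eq_of_sortedLE (List.sortedLE_ofFn_iff.mpr hm) (List.sortedLE_ofFn_iff.mpr hm')
  exact List.ofFn_injective this

theorem exists_pos (n k : ℕ) [NeZero n] (Q : Fin k → ℤ)
    (hQ : ∀ i, 1 ≤ Q i ∧ Q i ≤ n) (hm : Monotone Q) :
    ∃ μ : PartBox (n - 1) k, (∀ c, cfgOf n k μ c = cnt n Q c) ∧ ∀ i, (pos n k μ i : ℤ) = Q i := by
  obtain ⟨μ, hμ⟩ := cfg_surj n k (cnt n Q) (cnt_sum n k Q)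
  refine ⟨μ, hμ, ?_⟩
  have hn : 0 < n := Nat.pos_of_ne_zero (NeZero.ne n)
  have := pos_unique n k (fun i => (pos n k μ i : ℤ)) Q
    (fun i => by have := pos_le n k μ i; have := pos_ge n k hn μ i; omega) hQ
    (fun i j h => by have := pos_mono n k μ h; exact Int.ofNat_le.mpr this) hm
    (fun c => by rw [← cfg_eq_cnt, hμ])
  intro i
  exact congrFun this i


/-! ### Part 4: the hopping operators -/

open Classical in
/-- value of a vector at an (integer valued) configuration -/
def extF (n k : ℕ) (f : HkSp ℂ n k) (m : ZMod n → ℤ) : ℂ :=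
  ∑ σ : PartBox (n - 1) k, if (∀ c, (cfgOf n k σ c : ℤ) = m c) then f σ else 0

theorem extF_cfg (n k : ℕ) [NeZero n] (f : HkSp ℂ n k) (m : ZMod n → ℤ) (μ : PartBox (n - 1) k)
    (h : ∀ c, (cfgOf n k μ c : ℤ) = m c) : extF n k f m = f μ := by
  unfold extF
  rw [Finset.sum_eq_single μ]
  · rw [if_pos h]
  · intro σ _ hσ
    rw [if_neg]
    intro h'
    apply hσ
    apply cfg_inj
    intro c
    have := (h' c).trans (h c).symm
    exact_mod_cast this
  · intro h; exact absurd (Finset.mem_univ _) h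

theorem extF_neg (n k : ℕ) (f : HkSp ℂ n k) (m : ZMod n → ℤ) (c : ZMod n)
    (h : m c < 0) : extF n k f m = 0 := by
  unfold extF
  apply Finset.sum_eq_zero
  intro σ _
  rw [if_neg]
  intro h'
  have := h' c
  omega

theorem extF_sum (n k : ℕ) {ι : Type*} (s : Finset ι) (f : ι → HkSp ℂ n k) (m : ZMod n → ℤ) :
    extF n k (∑ a ∈ s, f a) m = ∑ a ∈ s, extF n k (f a) m := by
  unfold extF
  rw [Finset.sum_comm]
  refine Finset.sum_congr rfl fun σ _ => ?_
  split_ifs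
  · rw [Finsupp.finsetSum_apply]
  · simp

def dlt {n : ℕ} (i : ZMod n) : ZMod n → ℤ := Pi.single i 1 - Pi.single (i + 1) 1

def wt {n : ℕ} (z : ℂ) (i : ZMod n) : ℂ := if i = 0 then z else 1

theorem exists_cfg (n k : ℕ) [NeZero n] (m : ZMod n → ℤ) (h0 : ∀ c, 0 ≤ m c)
    (hs : ∑ c, m c = k) : ∃ σ : PartBox (n - 1) k, ∀ c, (cfgOf n k σ c : ℤ) = m c := by
  obtain ⟨σ, hσ⟩ := cfg_surj n k (fun c => (m c).toNat) (by
    zify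
    rw [← hs]
    exact Finset.sum_congr rfl fun c _ => by have := h0 c; omega)
  refine ⟨σ, fun c => ?_⟩
  rw [hσ]
  have := h0 c
  omega

theorem aOp_apply (n k : ℕ) [NeZero n] (z : ℂ) (i : ZMod n) (f : HkSp ℂ n k)
    (μ : PartBox (n - 1) k) :
    aOp ℂ n k z i f μ = ∑ σ, f σ * (if cfgOf n k σ i = 0 then 0 else
      if cfgOf n k μ = (fun c => cfgOf n k σ c - (Pi.single i 1 : ZMod n → ℕ) c +
          (Pi.single (i + 1) 1 : ZMod n → ℕ) c) then wt z i else 0) := by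
  unfold aOp
  rw [Finsupp.lift_apply, Finsupp.sum_fintype _ _ (by intro; simp), Finsupp.finsetSum_apply]
  refine Finset.sum_congr rfl fun σ _ => ?_
  rw [Finsupp.smul_apply, smul_eq_mul]
  congr 1
  change (if cfgOf n k σ i = 0 then 0 else toBasis ℂ n k _ (wt z i) : HkSp ℂ n k) μ = _
  split_ifs with h1 h2
  · simp
  · unfold toBasis
    rw [Finsupp.finsetSum_apply, Finset.sum_eq_single μ]
    · rw [if_pos h2]; simp
    · intro b _ hb
      split_ifs <;> simp [hb]
    · intro h; exact absurd (Finset.mem_univ _) h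
  · unfold toBasis
    rw [Finsupp.finsetSum_apply, Finset.sum_eq_zero]
    intro b _
    by_cases hb : b = μ
    · subst hb; rw [if_neg h2]; simp
    · split_ifs <;> simp [hb]

theorem ne_succ (n : ℕ) (hn : 2 ≤ n) (i : ZMod n) : i ≠ i + 1 := by
  intro h
  have : Fact (1 < n) := ⟨by omega⟩
  have h1 : (1 : ZMod n) = 0 := by
    have := congrArg (fun t => t - i) h
    simpa using this.symm
  exact one_ne_zero h1

theorem extF_aOp (n k : ℕ) [NeZero n] (hn : 2 ≤ n) (z : ℂ) (i : ZMod n) (f : HkSp ℂ n k)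
    (m : ZMod n → ℤ) (h0 : ∀ c, 0 ≤ m c) (hs : ∑ c, m c = k) :
    extF n k (aOp ℂ n k z i f) m = wt z i * extF n k f (m + dlt i) := by
  obtain ⟨μ, hμ⟩ := exists_cfg n k m h0 hs
  rw [extF_cfg n k _ m μ hμ, aOp_apply]
  unfold extF
  rw [Finset.mul_sum]
  refine Finset.sum_congr rfl fun σ _ => ?_
  have hi := ne_succ n hn i
  have key : (cfgOf n k σ i ≠ 0 ∧ cfgOf n k μ = (fun c => cfgOf n k σ c -
      (Pi.single i 1 : ZMod n → ℕ) c + (Pi.single (i + 1) 1 : ZMod n → ℕ) c)) ↔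
      ∀ c, (cfgOf n k σ c : ℤ) = (m + dlt i) c := by
    constructor
    · rintro ⟨h1, h2⟩ c
      have h3 := congrFun h2 c
      have h4 := hμ c
      simp only [dlt, Pi.add_apply, Pi.sub_apply]
      by_cases hc : c = i
      · subst hc
        simp only [Pi.single_eq_same, Pi.single_eq_of_ne hi] at h3 ⊢
        omega
      · by_cases hc' : c = i + 1
        · subst hc'
          simp only [Pi.single_eq_same, Pi.single_eq_of_ne hc] at h3 ⊢
          omega
        · simp only [Pi.single_eq_of_ne hc', Pi.single_eq_of_ne hc] at h3 ⊢
          omega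
    · intro h
      constructor
      · have h3 := h i
        have h4 := hμ i
        have h5 := h0 i
        simp only [dlt, Pi.add_apply, Pi.sub_apply, Pi.single_eq_same, Pi.single_eq_of_ne hi] at h3
        omega
      · funext c
        have h3 := h c
        have h4 := hμ c
        have h5 := h0 c
        simp only [dlt, Pi.add_apply, Pi.sub_apply] at h3
        by_cases hc : c = i
        · subst hc
          simp only [Pi.single_eq_same, Pi.single_eq_of_ne hi] at h3 ⊢
          omega
        · by_cases hc' : c = i + 1
          · subst hc'
            simp only [Pi.single_eq_same, Pi.single_eq_of_ne hc] at h3 ⊢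
            omega
          · simp only [Pi.single_eq_of_ne hc', Pi.single_eq_of_ne hc] at h3 ⊢
            omega
  by_cases hh : ∀ c, (cfgOf n k σ c : ℤ) = (m + dlt i) c
  · obtain ⟨h1, h2⟩ := key.mpr hh
    rw [if_pos hh, if_neg h1, if_pos h2, mul_comm]
  · rw [if_neg hh, mul_zero]
    by_cases h1 : cfgOf n k σ i = 0
    · rw [if_pos h1, mul_zero]
    · rw [if_neg h1, if_neg (fun h2 => hh (key.mp ⟨h1, h2⟩)), mul_zero]

theorem dlt_sum {n : ℕ} [NeZero n] (i : ZMod n) : ∑ c, dlt i c = 0 := by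
  simp [dlt]

theorem extF_list (n k : ℕ) [NeZero n] (hn : 2 ≤ n) (z : ℂ) (f : HkSp ℂ n k)
    (L : List (ZMod n)) (hnd : L.Nodup) (hp : L.Pairwise (fun a b => b ≠ a + 1))
    (m : ZMod n → ℤ) (h0 : ∀ c, 0 ≤ m c) (hs : ∑ c, m c = k) :
    extF n k ((L.map (aOp ℂ n k z)).prod f) m =
      if ∀ j ∈ L, j + 1 ∉ L → 1 ≤ m (j + 1) then
        (L.map (wt z)).prod * extF n k f (m + (L.map dlt).sum) else 0 := by
  induction L generalizing m with
  | nil => simp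
  | cons i L ih =>
    rw [List.nodup_cons] at hnd
    rw [List.pairwise_cons] at hp
    have hi := ne_succ n hn i
    have hiL : i + 1 ∉ L := fun h => hp.1 _ h rfl
    rw [List.map_cons, List.prod_cons, Module.End.mul_apply, extF_aOp n k hn z i _ m h0 hs]
    by_cases hm : 1 ≤ m (i + 1)
    · have h0' : ∀ c, 0 ≤ (m + dlt i) c := by
        intro c
        have := h0 c
        simp only [dlt, Pi.add_apply, Pi.sub_apply]
        by_cases hc' : c = i + 1
        · subst hc'
          simp only [Pi.single_eq_same, Pi.single_eq_of_ne hi.symm]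
          omega
        · simp only [Pi.single_eq_of_ne hc']
          by_cases hc : c = i
          · subst hc
            simp only [Pi.single_eq_same]
            omega
          · simp only [Pi.single_eq_of_ne hc]
            omega
      have hs' : ∑ c, (m + dlt i) c = k := by
        simp only [Pi.add_apply, Finset.sum_add_distrib, dlt_sum, hs, add_zero]
      rw [ih hnd.2 hp.2 _ h0' hs']
      have hiff : (∀ j ∈ L, j + 1 ∉ L → 1 ≤ (m + dlt i) (j + 1)) ↔
          (∀ j ∈ i :: L, j + 1 ∉ i :: L → 1 ≤ m (j + 1)) := by
        constructor
        · intro h j hj hj1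
          rcases List.mem_cons.mp hj with rfl | hj
          · exact hm
          · rw [List.mem_cons, not_or] at hj1
            have h2 := h j hj hj1.2
            have hji : j + 1 ≠ i + 1 := fun h => hnd.1 (by rwa [← add_right_cancel h])
            simpa [dlt, Pi.single_eq_of_ne hj1.1, Pi.single_eq_of_ne hji] using h2
        · intro h j hj hj1
          have hji : j + 1 ≠ i + 1 := fun h => hnd.1 (by rwa [← add_right_cancel h])
          by_cases hj2 : j + 1 = i
          · have := h0 i
            simp only [dlt, Pi.add_apply, Pi.sub_apply, hj2, Pi.single_eq_same,
              Pi.single_eq_of_ne hi]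
            omega
          · have h2 := h j (List.mem_cons_of_mem _ hj) (by
              rw [List.mem_cons, not_or]; exact ⟨hj2, hj1⟩)
            simpa [dlt, Pi.single_eq_of_ne hj2, Pi.single_eq_of_ne hji] using h2
      simp only [hiff]
      split_ifs
      · rw [List.map_cons, List.prod_cons, List.map_cons, List.sum_cons, mul_assoc, add_assoc]
      · rw [mul_zero]
    · rw [if_neg, extF_neg n k _ _ (i + 1), mul_zero]
      · simp only [dlt, Pi.add_apply, Pi.sub_apply, Pi.single_eq_same, Pi.single_eq_of_ne hi.symm]
        omega
      · intro h
        apply hm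
        apply h i (by simp)
        rw [List.mem_cons, not_or]
        exact ⟨hi.symm, hiL⟩

theorem zgap_notMem {n : ℕ} [NeZero n] (I : Finset (ZMod n)) (hI : I ≠ Finset.univ) :
    zgap I ∉ I := by
  have hne : ((Finset.univ \ I).image ZMod.val).Nonempty := by
    rw [Finset.image_nonempty, Finset.sdiff_nonempty]
    intro h
    exact hI (Finset.univ_subset_iff.mp h)
  unfold zgap
  rw [dif_pos hne]
  have h1 := Finset.min'_mem _ hne
  rw [Finset.mem_image] at h1
  obtain ⟨c, hc, hce⟩ := h1
  rw [← hce]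
  simpa using hc

theorem list_ite_prod {ι A : Type*} [DecidableEq ι] [Monoid A] (a : ι → A) (I : Finset ι)
    (L : List ι) :
    (L.map fun i => if i ∈ I then a i else 1).prod = ((L.filter (· ∈ I)).map a).prod := by
  induction L with
  | nil => simp
  | cons i L ih =>
    rw [List.map_cons, List.prod_cons, ih]
    by_cases h : i ∈ I
    · simp [h]
    · simp [h]

theorem extF_cyc (n k : ℕ) [NeZero n] (hn : 2 ≤ n) (z : ℂ) (f : HkSp ℂ n k)
    (I : Finset (ZMod n)) (hI : I ≠ Finset.univ)
    (m : ZMod n → ℤ) (h0 : ∀ c, 0 ≤ m c) (hs : ∑ c, m c = k) :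
    extF n k (cycProdDesc (aOp ℂ n k z) I f) m =
      if ∀ j ∈ I, j + 1 ∉ I → 1 ≤ m (j + 1) then
        (∏ j ∈ I, wt z j) * extF n k f (m + ∑ j ∈ I, dlt j) else 0 := by
  set g := zgap I with hg
  have hgI : g ∉ I := zgap_notMem I hI
  set L0 : List (ZMod n) := (List.range n).map (fun t : ℕ => g - 1 - (t : ZMod n)) with hL0
  set L := L0.filter (· ∈ I) with hL
  have hinj : ∀ s t : ℕ, s < n → t < n → (s : ZMod n) = (t : ZMod n) → s = t := by
    intro a b ha hb hab
    have := congrArg ZMod.val hab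
    rwa [ZMod.val_cast_of_lt ha, ZMod.val_cast_of_lt hb] at this
  have hprod : cycProdDesc (aOp ℂ n k z) I = (L.map (aOp ℂ n k z)).prod := by
    have hb : (List.range n >>= fun a => pure (a : ZMod n)) =
        (List.range n).map (fun a : ℕ => (a : ZMod n)) := by
      simp [List.map_eq_flatMap]
      try rfl
    rw [hL, ← list_ite_prod, hL0, List.map_map]
    unfold cycProdDesc
    rw [hb, List.map_map]
    rfl
  have hnd0 : L0.Nodup := by
    refine List.Nodup.map_on ?_ List.nodup_range
    intro s hs t ht hst
    rw [List.mem_range] at hs ht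
    exact hinj s t hs ht (sub_right_injective hst)
  have hnd : L.Nodup := hnd0.filter _
  have hmem : ∀ c, c ∈ L ↔ c ∈ I := by
    intro c
    rw [hL, List.mem_filter]
    simp only [decide_eq_true_eq, and_iff_right_iff_imp]
    intro _
    rw [hL0, List.mem_map]
    refine ⟨(g - 1 - c).val, List.mem_range.mpr (ZMod.val_lt _), ?_⟩
    simp
  have hp : L.Pairwise (fun a b => b ≠ a + 1) := by
    have h1 : L0.Pairwise (fun a b => b = a + 1 → b = g) := by
      rw [hL0, List.pairwise_map]
      refine List.pairwise_lt_range.imp_of_mem ?_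
      intro s t hs ht hst h
      rw [List.mem_range] at hs ht
      rw [h]
      have h2 : (s : ZMod n) = ((t + 1 : ℕ) : ZMod n) := by
        push_cast
        linear_combination h
      rcases Nat.lt_or_ge (t + 1) n with h3 | h3
      · have := hinj _ _ hs h3 h2
        omega
      · have h4 : t + 1 = n := by omega
        rw [h4, ZMod.natCast_self] at h2
        rw [h2]; ring
    refine (h1.filter _).imp_of_mem ?_
    intro a b _ hb h hab
    have := h hab
    rw [this] at hb
    exact hgI ((hmem g).mp hb)
  have hfin : L.toFinset = I := by ext c; rw [List.mem_toFinset, hmem]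
  rw [hprod, extF_list n k hn z f L hnd hp m h0 hs]
  simp only [hmem]
  rw [← List.prod_toFinset _ hnd, ← List.sum_toFinset _ hnd, hfin]


/-! ### Part 5: hopping sets versus interlacing tuples -/

/-- standing assumptions on a tuple of positions -/
structure PosData (n K : ℕ) (P : Fin (K + 1) → ℤ) (D : Fin (K + 1) → ℕ) : Prop where
  rng : ∀ i, 1 ≤ P i ∧ P i ≤ n
  mono : Monotone P
  hD : ∀ i, P i - D i = prevP n P i

def site {K : ℕ} (n : ℕ) (P : Fin (K + 1) → ℤ) (i : Fin (K + 1)) (s : ℕ) : ZMod n :=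
  ((P i - 1 - s : ℤ) : ZMod n)

def Iset {K : ℕ} (n : ℕ) [NeZero n] (P : Fin (K + 1) → ℤ) (α : Fin (K + 1) → ℕ) :
    Finset (ZMod n) :=
  (Finset.univ.sigma fun i => Finset.range (α i)).image (fun t => site n P t.1 t.2)

theorem mod_eq_of_close (n : ℕ) (a b : ℤ) (h1 : a - b < n) (h2 : b - a < n)
    (h : (a : ZMod n) = (b : ZMod n)) : a = b := by
  rw [ZMod.intCast_eq_intCast_iff_dvd_sub] at h
  have := Int.eq_zero_of_abs_lt_dvd h (by rw [abs_lt]; omega)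
  omega

theorem site_succ {K : ℕ} (n : ℕ) (P : Fin (K + 1) → ℤ) (i : Fin (K + 1)) (s : ℕ) :
    site n P i (s + 1) + 1 = site n P i s := by
  unfold site
  push_cast
  ring

theorem site_zero {K : ℕ} (n : ℕ) (P : Fin (K + 1) → ℤ) (i : Fin (K + 1)) :
    site n P i 0 + 1 = (P i : ZMod n) := by
  unfold site
  push_cast
  ring

namespace PosData

variable {n K : ℕ} {P : Fin (K + 1) → ℤ} {D : Fin (K + 1) → ℕ}

theorem le_prev (h : PosData n K P D) {i j : Fin (K + 1)} (hij : i < j) : P i ≤ prevP n P j := by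
  obtain ⟨j', rfl⟩ := Fin.exists_succ_eq.mpr (Fin.ne_zero_of_lt hij)
  simp only [prevP, Fin.cons_succ]
  apply h.mono
  rw [Fin.le_def]
  rw [Fin.lt_def] at hij
  simp at hij ⊢
  omega

theorem prev_zero : prevP n P 0 = P (Fin.last K) - n := by simp [prevP]

theorem prev_ge (h : PosData n K P D) (i : Fin (K + 1)) : P (Fin.last K) - n ≤ prevP n P i := by
  refine Fin.cases ?_ (fun i => ?_) i
  · rw [prev_zero]
  · simp only [prevP, Fin.cons_succ]
    have := h.rng i.castSucc
    have := h.rng (Fin.last K)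
    omega

theorem le_last (h : PosData n K P D) (i : Fin (K + 1)) : P i ≤ P (Fin.last K) :=
  h.mono (Fin.le_last i)

theorem site_inj (h : PosData n K P D) {i j : Fin (K + 1)} {s t : ℕ} (hs : s < D i) (ht : t < D j)
    (e : site n P i s = site n P j t) : i = j ∧ s = t := by
  have h1 := h.hD i
  have h2 := h.hD j
  have h3 := h.prev_ge i
  have h4 := h.prev_ge j
  have h5 := h.le_last i
  have h6 := h.le_last j
  have h7 := mod_eq_of_close n _ _ (by omega) (by omega) e
  rcases lt_trichotomy i j with hij | hij | hij
  · have := h.le_prev hij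
    omega
  · subst hij
    exact ⟨rfl, by omega⟩
  · have := h.le_prev hij
    omega

theorem injOn (h : PosData n K P D) (α : Fin (K + 1) → ℕ) (hα : ∀ i, α i ≤ D i) :
    Set.InjOn (fun t : (_ : Fin (K + 1)) × ℕ => site n P t.1 t.2)
      (Finset.univ.sigma fun i => Finset.range (α i) : Finset ((_ : Fin (K + 1)) × ℕ)) := by
  rintro ⟨i, s⟩ hs ⟨j, t⟩ ht e
  simp only [Finset.coe_sigma, Set.mem_sigma_iff, Finset.coe_univ, Set.mem_univ, true_and,
    Finset.coe_range, Set.mem_Iio] at hs ht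
  have := h.site_inj (lt_of_lt_of_le hs (hα i)) (lt_of_lt_of_le ht (hα j)) e
  obtain ⟨rfl, rfl⟩ := this
  rfl

variable [NeZero n]

theorem card_Iset (h : PosData n K P D) (α : Fin (K + 1) → ℕ) (hα : ∀ i, α i ≤ D i) :
    (Iset n P α).card = ∑ i, α i := by
  unfold Iset
  rw [Finset.card_image_of_injOn (h.injOn α hα), Finset.card_sigma]
  simp

theorem site_surj (h : PosData n K P D) (c : ZMod n) : ∃ i s, s < D i ∧ site n P i s = c := by
  have h1 : (Iset n P D) = Finset.univ := by
    rw [← Finset.card_eq_iff_eq_univ, h.card_Iset D (fun _ => le_rfl), sum_D n P D h.hD, ZMod.card]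
  have h2 : c ∈ Iset n P D := by rw [h1]; exact Finset.mem_univ _
  unfold Iset at h2
  simp only [Finset.mem_image, Finset.mem_sigma, Finset.mem_univ, true_and, Finset.mem_range] at h2
  obtain ⟨⟨i, s⟩, h3, h4⟩ := h2
  exact ⟨i, s, h3, h4⟩

theorem mem_Iset (h : PosData n K P D) (α : Fin (K + 1) → ℕ) (hα : ∀ i, α i ≤ D i)
    (i : Fin (K + 1)) (s : ℕ) (hs : s < D i) : site n P i s ∈ Iset n P α ↔ s < α i := by
  unfold Iset
  simp only [Finset.mem_image, Finset.mem_sigma, Finset.mem_univ, true_and, Finset.mem_range]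
  constructor
  · rintro ⟨⟨j, t⟩, h3, h4⟩
    obtain ⟨h5, h6⟩ := h.site_inj (lt_of_lt_of_le h3 (hα j)) hs h4
    simp only at h5 h6 h3
    subst h5 h6
    exact h3
  · intro h3
    exact ⟨⟨i, s⟩, h3, rfl⟩

theorem cnt_mid (h : PosData n K P D) (i : Fin (K + 1)) (s : ℕ) (hs : s + 1 < D i) :
    cnt n P (site n P i s) = 0 := by
  unfold cnt
  rw [Finset.card_eq_zero, Finset.filter_eq_empty_iff]
  intro j _ e
  have h1 := h.hD i
  have h3 := h.prev_ge i
  have h5 := h.le_last i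
  have h6 := h.le_last j
  have h7 := h.rng j
  have h8 := h.rng i
  rcases lt_or_ge j i with hij | hij
  · have h9 := h.le_prev hij
    have := mod_eq_of_close n _ _ (by omega) (by omega) e
    omega
  · have h9 := h.mono hij
    by_cases hlt : P j - (P i - 1 - s) < n
    · have := mod_eq_of_close n _ _ hlt (by omega) e
      omega
    · omega

theorem cond_Iset (α : Fin (K + 1) → ℕ) :
    ∀ j ∈ Iset n P α, j + 1 ∉ Iset n P α → (1 : ℤ) ≤ (cnt n P (j + 1) : ℤ) := by
  intro c hc hc1
  have hc' := hc
  unfold Iset at hc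
  simp only [Finset.mem_image, Finset.mem_sigma, Finset.mem_univ, true_and, Finset.mem_range] at hc
  obtain ⟨⟨i, s⟩, h3, h4⟩ := hc
  simp only at h3 h4
  subst h4
  cases s with
  | zero =>
    rw [site_zero]
    have : 0 < cnt n P (P i : ZMod n) := by
      unfold cnt
      exact Finset.card_pos.mpr ⟨i, by simp⟩
    omega
  | succ s =>
    exfalso
    apply hc1
    rw [site_succ]
    unfold Iset
    simp only [Finset.mem_image, Finset.mem_sigma, Finset.mem_univ, true_and, Finset.mem_range]
    exact ⟨⟨i, s⟩, by simp only; omega, rfl⟩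

theorem exists_alpha (h : PosData n K P D) (I : Finset (ZMod n))
    (hI : ∀ j ∈ I, j + 1 ∉ I → (1 : ℤ) ≤ (cnt n P (j + 1) : ℤ)) :
    ∃ α : Fin (K + 1) → ℕ, (∀ i, α i ≤ D i) ∧ Iset n P α = I := by
  classical
  have hex : ∀ i, ∃ s, s = D i ∨ site n P i s ∉ I := fun i => ⟨D i, Or.inl rfl⟩
  have hle : ∀ i, Nat.find (hex i) ≤ D i := fun i => Nat.find_min' (hex i) (Or.inl rfl)
  refine ⟨fun i => Nat.find (hex i), hle, ?_⟩
  ext c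
  obtain ⟨i, s, hs, rfl⟩ := h.site_surj c
  rw [h.mem_Iset _ hle i s hs]
  constructor
  · intro h1
    have := Nat.find_min (hex i) h1
    rw [not_or, not_not] at this
    exact this.2
  · intro h1
    by_contra h2
    rw [not_lt] at h2
    have h3 := Nat.find_spec (hex i)
    have h4 : site n P i (Nat.find (hex i)) ∉ I := by
      rcases h3 with h3 | h3
      · omega
      · exact h3
    have h5 : ∀ t, Nat.find (hex i) ≤ t → t < D i → site n P i t ∉ I := by
      intro t ht
      induction t, ht using Nat.le_induction with
      | base => intro _; exact h4
      | succ t _ ih =>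
        intro ht2 hmem
        have h6 := hI _ hmem
        rw [site_succ] at h6
        have h7 := h6 (ih (by omega))
        rw [h.cnt_mid i t ht2] at h7
        omega
    exact h5 s h2 hs h1

theorem sum_bijection (h : PosData n K P D) (F : Finset (ZMod n) → ℂ) (r : ℕ)
    [∀ I : Finset (ZMod n), Decidable (∀ j ∈ I, j + 1 ∉ I → (1 : ℤ) ≤ (cnt n P (j + 1) : ℤ))] :
    (∑ I ∈ Finset.powersetCard r (Finset.univ : Finset (ZMod n)),
      if ∀ j ∈ I, j + 1 ∉ I → (1 : ℤ) ≤ (cnt n P (j + 1) : ℤ) then F I else 0) =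
    ∑ α ∈ (Fintype.piFinset fun i => Finset.range (D i + 1)).filter (fun α => ∑ i, α i = r),
      F (Iset n P α) := by
  rw [← Finset.sum_filter]
  symm
  have hmemα : ∀ α, α ∈ (Fintype.piFinset fun i => Finset.range (D i + 1)).filter
      (fun α => ∑ i, α i = r) ↔ (∀ i, α i ≤ D i) ∧ ∑ i, α i = r := by
    intro α
    simp only [Finset.mem_filter, Fintype.mem_piFinset, Finset.mem_range, Nat.lt_succ_iff]
  refine Finset.sum_bij (fun α _ => Iset n P α) ?_ ?_ ?_ ?_
  · intro α hα
    rw [hmemα] at hα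
    rw [Finset.mem_filter, Finset.mem_powersetCard]
    exact ⟨⟨Finset.subset_univ _, (h.card_Iset α hα.1).trans hα.2⟩, cond_Iset α⟩
  · intro α hα β hβ e
    rw [hmemα] at hα hβ
    funext i
    rcases lt_trichotomy (α i) (β i) with h1 | h1 | h1
    · have h2 : α i < D i := lt_of_lt_of_le h1 (hβ.1 i)
      have h3 := (h.mem_Iset β hβ.1 i (α i) h2).mpr h1
      rw [← e, h.mem_Iset α hα.1 i _ h2] at h3
      omega
    · exact h1
    · have h2 : β i < D i := lt_of_lt_of_le h1 (hα.1 i)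
      have h3 := (h.mem_Iset α hα.1 i (β i) h2).mpr h1
      rw [e, h.mem_Iset β hβ.1 i _ h2] at h3
      omega
  · intro I hI
    rw [Finset.mem_filter, Finset.mem_powersetCard] at hI
    obtain ⟨α, hα, e⟩ := h.exists_alpha I hI.2
    refine ⟨α, ?_, e⟩
    rw [hmemα]
    refine ⟨hα, ?_⟩
    rw [← h.card_Iset α hα, e]
    exact hI.1.2
  · intro _ _; rfl

theorem cnt_single {k : ℕ} (Q : Fin k → ℤ) (c : ZMod n) :
    (cnt n Q c : ℤ) = ∑ i, (Pi.single ((Q i : ℤ) : ZMod n) 1 : ZMod n → ℤ) c := by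
  unfold cnt
  rw [Finset.card_filter]
  push_cast
  refine Finset.sum_congr rfl fun i _ => ?_
  rw [Pi.single_apply]
  simp only [eq_comm]

theorem sum_dlt (h : PosData n K P D) (α : Fin (K + 1) → ℕ) (hα : ∀ i, α i ≤ D i) (c : ZMod n) :
    ((fun c => (cnt n P c : ℤ)) + ∑ j ∈ Iset n P α, dlt j) c =
      (cnt n (fun i => P i - α i) c : ℤ) := by
  unfold Iset
  rw [Finset.sum_image (h.injOn α hα), Finset.sum_sigma]
  have h1 : ∀ i : Fin (K + 1), ∑ s ∈ Finset.range (α i), dlt (site n P i s) =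
      (Pi.single ((P i - α i : ℤ) : ZMod n) 1 : ZMod n → ℤ) - Pi.single ((P i : ℤ) : ZMod n) 1 := by
    intro i
    generalize α i = a
    induction a with
    | zero => simp
    | succ a ih =>
      rw [Finset.sum_range_succ, ih]
      have h2 : site n P i a + 1 = ((P i - a : ℤ) : ZMod n) := by
        unfold site; push_cast; ring
      have h3 : site n P i a = ((P i - ((a + 1 : ℕ) : ℤ) : ℤ) : ZMod n) := by
        unfold site; push_cast; ring
      rw [dlt, h2, h3]
      abel
  simp only [h1]
  rw [Pi.add_apply, Finset.sum_apply, cnt_single, cnt_single, ← Finset.sum_add_distrib]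
  refine Finset.sum_congr rfl fun i _ => ?_
  simp

theorem prod_wt (h : PosData n K P D) (α : Fin (K + 1) → ℕ) (hα : ∀ i, α i ≤ D i) (z : ℂ) :
    ∏ j ∈ Iset n P α, wt z j = if P 0 - α 0 ≤ 0 then z else 1 := by
  unfold wt
  rw [Finset.prod_ite_eq']
  have hr := h.rng 0
  have hiff : (0 : ZMod n) ∈ Iset n P α ↔ P 0 - α 0 ≤ 0 := by
    constructor
    · intro h0
      unfold Iset at h0
      simp only [Finset.mem_image, Finset.mem_sigma, Finset.mem_univ, true_and,
        Finset.mem_range] at h0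
      obtain ⟨⟨i, s⟩, h3, h4⟩ := h0
      simp only at h3 h4
      have h5 := h.hD i
      have h6 := h.rng i
      have h7 := h.rng (Fin.last K)
      have h8 := hα i
      have h9 := h.prev_ge i
      have e : ((P i - 1 - s : ℤ) : ZMod n) = ((0 : ℤ) : ZMod n) := by
        rw [Int.cast_zero]; exact h4
      have h10 := mod_eq_of_close n _ _ (by omega) (by omega) e
      by_cases hi : i = 0
      · subst hi; omega
      · have := h.le_prev (Fin.pos_of_ne_zero hi)
        omega
    · intro h0
      unfold Iset
      simp only [Finset.mem_image, Finset.mem_sigma, Finset.mem_univ, true_and, Finset.mem_range]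
      refine ⟨⟨0, (P 0 - 1).toNat⟩, by simp only; omega, ?_⟩
      unfold site
      have : (P 0 - 1 - ((P 0 - 1).toNat : ℤ)) = 0 := by omega
      simp only [this, Int.cast_zero]
  simp only [hiff]

end PosData


/-! ### Part 6: assembling the proof -/

theorem betheVec_apply (n k : ℕ) (x : Fin k → ℂ) (μ : PartBox (n - 1) k) :
    betheVec n k x μ = schurC (fun i => (x i)⁻¹) (transpGen (lamHat n k μ) k) := by
  unfold betheVec
  rw [Finsupp.finsetSum_apply, Finset.sum_eq_single μ]
  · simp
  · intro b _ hb
    simp [hb]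
  · intro h; exact absurd (Finset.mem_univ _) h

theorem bethe_ext (n k : ℕ) [NeZero n] (x : Fin k → ℂ) (κ : ℂ)
    (hκ : ∀ lam : Fin k → ℕ, altA x (fun i => (lam i.rev : ℤ)) =
      κ * schurC (fun i => (x i)⁻¹) lam) (Q : Fin k → ℤ)
    (hQ : ∀ i, 1 ≤ Q i ∧ Q i ≤ n) (hm : Monotone Q) :
    κ * extF n k (betheVec n k x) (fun c => (cnt n Q c : ℤ)) = altA x Q := by
  obtain ⟨μ, h1, h2⟩ := exists_pos n k Q hQ hm
  rw [extF_cfg n k _ _ μ (fun c => by rw [h1]), betheVec_apply, ← hκ]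
  congr 1
  funext i
  exact h2 i

theorem bethe_ext_shift (n K : ℕ) [NeZero n] (z : ℂ) (x : Fin (K + 1) → ℂ) (κ : ℂ)
    (hx0 : ∀ i, x i ≠ 0) (hb : ∀ i, x i ^ (n + (K + 1)) = (-1) ^ K * z * ∏ j, x j)
    (hκ : ∀ lam : Fin (K + 1) → ℕ, altA x (fun i => (lam i.rev : ℤ)) =
      κ * schurC (fun i => (x i)⁻¹) lam) (P : Fin (K + 1) → ℤ) (D : Fin (K + 1) → ℕ)
    (h : PosData n K P D) (α : Fin (K + 1) → ℕ) (hα : ∀ i, α i ≤ D i) :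
    κ * ((if P 0 - α 0 ≤ 0 then z else 1) *
      extF n (K + 1) (betheVec n (K + 1) x) (fun c => (cnt n (fun i => P i - α i) c : ℤ))) =
      altA x (fun i => P i - α i) := by
  have hlo : ∀ i, prevP n P i ≤ P i - α i := by
    intro i
    have := h.hD i
    have := hα i
    omega
  have hmono : ∀ i j : Fin (K + 1), i < j → P i ≤ P j - α j := fun i j hij =>
    (h.le_prev hij).trans (hlo j)
  have hm : Monotone (fun i => P i - (α i : ℤ)) := by
    intro i j hij
    rcases hij.eq_or_lt with rfl | hij
    · exact le_rfl
    · have := hmono i j hij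
      simp only
      omega
  split_ifs with h0
  · set Q : Fin (K + 1) → ℤ := fun i => P i - α i with hQdef
    set Q' : Fin (K + 1) → ℤ := (Fin.snoc (fun i : Fin K => Q i.succ) (Q 0 + n) :
      Fin (K + 1) → ℤ) with hQ'
    have e1 : ∀ i : Fin K, Q' i.castSucc = Q i.succ := by intro i; simp [hQ']
    have e2 : Q' (Fin.last K) = Q 0 + n := by simp [hQ']
    have hl := hlo 0
    rw [PosData.prev_zero] at hl
    have hup : ∀ i, Q i ≤ Q 0 + n := by
      intro i
      have := h.le_last i
      simp only [hQdef]
      omega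
    have hr : ∀ i, 1 ≤ Q' i ∧ Q' i ≤ n := by
      intro i
      refine Fin.lastCases ?_ (fun i => ?_) i
      · rw [e2]
        have := h.rng (Fin.last K)
        simp only [hQdef]
        omega
      · rw [e1]
        have a1 := hmono 0 i.succ (Fin.succ_pos i)
        have a2 := h.rng 0
        have a3 := h.rng i.succ
        simp only [hQdef]
        omega
    have hm' : Monotone Q' := by
      intro i j
      refine Fin.lastCases ?_ (fun j => ?_) j
      · intro _
        rw [e2]
        refine Fin.lastCases ?_ (fun i => ?_) i
        · rw [e2]
        · rw [e1]; exact hup _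
      · refine Fin.lastCases ?_ (fun i => ?_) i
        · intro hij
          exact absurd hij (not_le.mpr (Fin.castSucc_lt_last j))
        · intro hij
          rw [e1, e1]
          exact hm (by simpa using hij)
    have hc : ∀ c, (cnt n Q c : ℤ) = (cnt n Q' c : ℤ) := by
      intro c
      rw [PosData.cnt_single, PosData.cnt_single, Fin.sum_univ_succ, Fin.sum_univ_castSucc, e2]
      simp only [e1]
      push_cast
      simp only [CharP.cast_eq_zero, add_zero]
      ring
    have hmain := bethe_ext n (K + 1) x κ hκ Q' hr hm'
    rw [← alt_rot n z x hx0 hb Q, ← hQ', ← hmain]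
    simp only [hc]
    ring
  · rw [one_mul]
    apply bethe_ext n (K + 1) x κ hκ _ _ hm
    intro i
    have a0 := hm (Fin.zero_le i)
    have a1 := (h.rng i).2
    simp only at a0 ⊢
    omega

theorem posData_pos (n K : ℕ) (hn : 1 ≤ n) (μ : PartBox (n - 1) (K + 1)) :
    PosData n K (fun i => (pos n (K + 1) μ i : ℤ))
      (fun i => ((pos n (K + 1) μ i : ℤ) -
        prevP n (fun i => (pos n (K + 1) μ i : ℤ)) i).toNat) := by
  have hmono : Monotone (fun i => (pos n (K + 1) μ i : ℤ)) := by
    intro i j hij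
    exact Int.ofNat_le.mpr (pos_mono n (K + 1) μ hij)
  refine ⟨fun i => ?_, hmono, fun i => ?_⟩
  · have := pos_le n (K + 1) μ i
    have := pos_ge n (K + 1) hn μ i
    constructor <;> omega
  · have hle : prevP n (fun i => (pos n (K + 1) μ i : ℤ)) i ≤ (pos n (K + 1) μ i : ℤ) := by
      refine Fin.cases ?_ (fun i => ?_) i
      · rw [PosData.prev_zero]
        have := pos_le n (K + 1) μ (Fin.last K)
        omega
      · simp only [prevP, Fin.cons_succ]
        exact hmono (Fin.castSucc_lt_succ).le
    omega

theorem eig_mid (n K : ℕ) [NeZero n] (hn : 2 ≤ n) (z : ℂ) (x : Fin (K + 1) → ℂ)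
    (hx0 : ∀ i, x i ≠ 0) (hxd : Function.Injective x)
    (hb : ∀ i, x i ^ (n + (K + 1)) = (-1) ^ K * z * ∏ j, x j) (r : ℕ) (h1 : 1 ≤ r)
    (h2 : r ≤ n - 1) :
    eAInt ℂ n (K + 1) z (r : ℤ) (betheVec n (K + 1) x) =
      hC x (r : ℤ) • betheVec n (K + 1) x := by
  classical
  obtain ⟨κ, hκ0, hκ⟩ := schur_alt x hxd
  apply Finsupp.ext
  intro μ
  have h := posData_pos n K (by omega) μ
  set P : Fin (K + 1) → ℤ := fun i => (pos n (K + 1) μ i : ℤ) with hP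
  set D : Fin (K + 1) → ℕ := fun i => ((pos n (K + 1) μ i : ℤ) - prevP n P i).toNat with hD
  have hcnt : ∀ c, (cfgOf n (K + 1) μ c : ℤ) = (cnt n P c : ℤ) := by
    intro c; rw [cfg_eq_cnt]
  have hsum : ∑ c, (cnt n P c : ℤ) = ((K + 1 : ℕ) : ℤ) := by
    exact_mod_cast cnt_sum n (K + 1) P
  rw [← extF_cfg n (K + 1) (eAInt ℂ n (K + 1) z (r : ℤ) (betheVec n (K + 1) x))
    (fun c => (cnt n P c : ℤ)) μ hcnt]
  unfold eAInt
  rw [if_neg (by omega), if_pos (by omega), LinearMap.sum_apply, extF_sum, Int.toNat_natCast]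
  rw [Finset.sum_congr rfl (fun I hI => extF_cyc n (K + 1) hn z (betheVec n (K + 1) x) I
    (by
      rintro rfl
      rw [Finset.mem_powersetCard] at hI
      have := hI.2
      rw [Finset.card_univ, ZMod.card] at this
      omega) (fun c => (cnt n P c : ℤ)) (fun c => by positivity) hsum)]
  rw [h.sum_bijection]
  apply mul_left_cancel₀ hκ0
  rw [Finsupp.smul_apply, smul_eq_mul, Finset.mul_sum]
  have hb' : κ * betheVec n (K + 1) x μ = altA x P := by
    rw [betheVec_apply, ← hκ]; rfl
  rw [mul_left_comm, hb', pieri n _ x hx0 hb P D h.hD r (by omega)]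
  refine Finset.sum_congr rfl fun α hα => ?_
  rw [Finset.mem_filter, Fintype.mem_piFinset] at hα
  have hα' : ∀ i, α i ≤ D i := fun i => by have := Finset.mem_range.mp (hα.1 i); omega
  rw [← bethe_ext_shift n K z x κ hx0 hb hκ P D h α hα', h.prod_wt α hα']
  congr 3
  funext c
  exact h.sum_dlt α hα' c

theorem h_big (n K : ℕ) [NeZero n] (hn : 2 ≤ n) (z : ℂ) (x : Fin (K + 1) → ℂ)
    (hx0 : ∀ i, x i ≠ 0) (hxd : Function.Injective x)
    (hb : ∀ i, x i ^ (n + (K + 1)) = (-1) ^ K * z * ∏ j, x j) (r : ℕ) (h1 : n ≤ r)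
    (h2 : r < n + (K + 1)) :
    hC x (r : ℤ) • betheVec n (K + 1) x = (if r = n then z else 0) • betheVec n (K + 1) x := by
  obtain ⟨κ, hκ0, hκ⟩ := schur_alt x hxd
  apply Finsupp.ext
  intro μ
  have h := posData_pos n K (by omega) μ
  set P : Fin (K + 1) → ℤ := fun i => (pos n (K + 1) μ i : ℤ) with hP
  set D : Fin (K + 1) → ℕ := fun i => ((pos n (K + 1) μ i : ℤ) - prevP n P i).toNat with hD
  have hb' : κ * betheVec n (K + 1) x μ = altA x P := by
    rw [betheVec_apply, ← hκ]; rfl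
  apply mul_left_cancel₀ hκ0
  rw [Finsupp.smul_apply, smul_eq_mul, Finsupp.smul_apply, smul_eq_mul]
  rw [mul_left_comm, hb', mul_left_comm, hb', pieri n _ x hx0 hb P D h.hD r (by omega)]
  have hDs : ∑ i, D i = n := sum_D n P D h.hD
  have hrot : z * altA x P = altA x (fun i => P i - D i) := by
    rw [← alt_rot n z x hx0 hb (fun i => P i - D i)]
    congr 2
    funext i
    refine Fin.lastCases ?_ (fun i => ?_) i
    · simp only [Fin.snoc_last, h.hD, PosData.prev_zero]; ring
    · simp only [Fin.snoc_castSucc, h.hD]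
      simp [prevP]
  split_ifs with hr
  · rw [hrot]
    refine Finset.sum_eq_single_of_mem D ?_ ?_
    · rw [Finset.mem_filter, Fintype.mem_piFinset]
      exact ⟨fun i => by simp, by omega⟩
    · intro α hα hne
      exfalso
      apply hne
      rw [Finset.mem_filter, Fintype.mem_piFinset] at hα
      have hα' : ∀ i ∈ Finset.univ, α i ≤ D i := fun i _ => by
        have := Finset.mem_range.mp (hα.1 i); omega
      funext i
      exact (Finset.sum_eq_sum_iff_of_le hα').mp (by omega) i (Finset.mem_univ i)
  · rw [zero_mul]
    apply Finset.sum_eq_zero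
    intro α hα
    exfalso
    rw [Finset.mem_filter, Fintype.mem_piFinset] at hα
    have hα' : ∀ i ∈ Finset.univ, α i ≤ D i := fun i _ => by
      have := Finset.mem_range.mp (hα.1 i); omega
    have := Finset.sum_le_sum hα'
    omega

theorem eig_all (n K : ℕ) [NeZero n] (hn : 2 ≤ n) (z : ℂ) (x : Fin (K + 1) → ℂ)
    (hx0 : ∀ i, x i ≠ 0) (hxd : Function.Injective x)
    (hb : ∀ i, x i ^ (n + (K + 1)) = (-1) ^ K * z * ∏ j, x j) (t : ℤ)
    (ht : t < n + (K + 1)) :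
    eAInt ℂ n (K + 1) z t (betheVec n (K + 1) x) = hC x t • betheVec n (K + 1) x := by
  rcases lt_or_ge t 0 with h | h
  · unfold eAInt
    rw [hC_neg x t h, if_neg (by omega), if_neg (by omega), if_neg (by omega)]
    simp
  · lift t to ℕ using h
    rcases Nat.eq_zero_or_pos t with rfl | h1
    · unfold eAInt
      rw [if_pos (by simp)]
      simp only [Nat.cast_zero, hC_zero, one_smul, Module.End.one_apply]
    · rcases Nat.lt_or_ge t n with h2 | h2
      · exact eig_mid n K hn z x hx0 hxd hb t h1 (by omega)
      · rw [h_big n K hn z x hx0 hxd hb t h2 (by omega)]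
        unfold eAInt
        rw [if_neg (by omega), if_neg (by omega)]
        by_cases h3 : t = n
        · rw [if_pos (by omega), if_pos h3]; simp
        · rw [if_neg (by omega), if_neg h3]; simp

theorem ncDet_eig {V : Type*} [AddCommGroup V] [Module ℂ V] {r : ℕ}
    (M : Fin r → Fin r → Module.End ℂ V) (N : Fin r → Fin r → ℂ) (v : V)
    (h : ∀ i j, M i j v = N i j • v) : ncDet M v = (Matrix.of N).det • v := by
  unfold ncDet
  have hl : ∀ (σ : Equiv.Perm (Fin r)) (l : List (Fin r)),
      (l.map fun i => M (σ i) i).prod v = (l.map fun i => N (σ i) i).prod • v := by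
    intro σ l
    induction l with
    | nil => simp
    | cons a l ih =>
      simp only [List.map_cons, List.prod_cons, Module.End.mul_apply, ih, map_smul, h, smul_smul]
      rw [mul_comm]
  rw [Matrix.det_apply', Finset.sum_smul, LinearMap.sum_apply]
  refine Finset.sum_congr rfl fun σ _ => ?_
  rw [Module.End.mul_apply, hl, map_smul]
  have : ((List.finRange r).map fun i => N (σ i) i).prod = ∏ i, Matrix.of N (σ i) i := by
    rw [← List.ofFn_eq_map, List.prod_ofFn]
    rfl
  rw [this, Module.End.intCast_apply, ← Int.cast_smul_eq_zsmul ℂ, smul_smul, mul_comm]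

theorem det_trunc {k : ℕ} (x : Fin k → ℂ) (q : ℕ → ℕ) (L : ℕ) (hq : ∀ i, L ≤ i → q i = 0) (d : ℕ) :
    (Matrix.of fun i j : Fin (L + d) => hC x ((q i : ℤ) - ((i : ℕ) : ℤ) + ((j : ℕ) : ℤ))).det =
    (Matrix.of fun i j : Fin L => hC x ((q i : ℤ) - ((i : ℕ) : ℤ) + ((j : ℕ) : ℤ))).det := by
  induction d with
  | zero => rfl
  | succ d ih =>
    rw [← ih]
    change (Matrix.of fun i j : Fin (L + d + 1) =>
      hC x ((q i : ℤ) - ((i : ℕ) : ℤ) + ((j : ℕ) : ℤ))).det = _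
    rw [Matrix.det_succ_row _ (Fin.last (L + d)), Fin.sum_univ_castSucc, Finset.sum_eq_zero]
    · rw [zero_add]
      simp only [Matrix.of_apply, Fin.val_last, hq (L + d) (by omega)]
      rw [show ((0 : ℕ) : ℤ) - ((L + d : ℕ) : ℤ) + ((L + d : ℕ) : ℤ) = 0 by push_cast; ring,
        hC_zero, ← two_mul, pow_mul]
      simp only [neg_one_sq, one_pow, one_mul]
      congr 1
      ext i j
      simp [Fin.succAbove_last]
    · intro j _
      simp only [Matrix.of_apply, Fin.val_last, hq (L + d) (by omega), Fin.val_castSucc]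
      rw [hC_neg x _ (by have := j.2; push_cast; omega)]
      simp

theorem part_two (n K : ℕ) [NeZero n] (hn : 2 ≤ n) (z : ℂ) (x : Fin (K + 1) → ℂ)
    (hx0 : ∀ i, x i ≠ 0) (hxd : Function.Injective x)
    (hb : ∀ i, x i ^ (n + (K + 1)) = (-1) ^ K * z * ∏ j, x j) (σ : PartBox (n - 1) (K + 1)) :
    sAOp ℂ n (K + 1) z σ (betheVec n (K + 1) x) =
          schurC x (transpGen (partVal σ) (K + 1)) • betheVec n (K + 1) x := by
  set q : ℕ → ℕ := fun j => (Finset.univ.filter fun i : Fin (n - 1) => j + 1 ≤ partVal σ i).card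
    with hq
  set L := padded (partVal σ) 0 with hL
  have hLk : L ≤ K + 1 := padded_le σ 0
  have hq0 : ∀ i, L ≤ i → q i = 0 := by
    intro i hi
    simp only [hq]
    rw [Finset.card_eq_zero, Finset.filter_eq_empty_iff]
    intro a _
    have h1 := padded_anti σ (Nat.zero_le (a : ℕ))
    have h2 : padded (partVal σ) (a : ℕ) = partVal σ a := by
      unfold padded; rw [dif_pos a.2]
    omega
  have hqn : ∀ i, q i ≤ n - 1 := by
    intro i
    exact (Finset.card_le_univ _).trans (by simp)
  unfold sAOp
  rw [ncDet_eig _ (fun i j => hC x ((transpGen (partVal σ) (padded (partVal σ) 0) i : ℤ) -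
    ((i : ℕ) : ℤ) + ((j : ℕ) : ℤ)))]
  · congr 1
    obtain ⟨d, hd⟩ := Nat.exists_eq_add_of_le hLk
    have h1 := det_trunc x q L hq0 d
    unfold schurC
    have h2 : ∀ m, m = L + d → (Matrix.of fun i j : Fin m =>
        hC x ((q i : ℤ) - ((i : ℕ) : ℤ) + ((j : ℕ) : ℤ))).det =
        (Matrix.of fun i j : Fin L => hC x ((q i : ℤ) - ((i : ℕ) : ℤ) + ((j : ℕ) : ℤ))).det := by
      rintro m rfl; exact h1
    exact (h2 (K + 1) hd).symm
  · intro i j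
    apply eig_all n K hn z x hx0 hxd hb
    have := hqn i
    have e : transpGen (partVal σ) (padded (partVal σ) 0) i = q i := rfl
    rw [e]
    have := j.2
    omega

/-- If `x` is a solution of the Bethe Ansatz equations with nonzero,
pairwise distinct entries, then the Bethe vector `b(x)` is a simultaneous eigenvector:
`e_r(𝒜) b(x) = h_r(x) b(x)` for `1 ≤ r ≤ n-1`, and `s_λ(𝒜) b(x) = s_{λ^t}(x) b(x)` for
every `λ ∈ 𝔓_{≤ n-1,k}`. -/
theorem bethe_vector_eigenvector (n k : ℕ) [NeZero n] (hn : 2 ≤ n) (hk : 1 ≤ k) (z : ℂ)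
    (x : Fin k → ℂ) (hx0 : ∀ i, x i ≠ 0) (hxd : Function.Injective x)
    (hbae : ∀ i, x i ^ (n + k) = (-1) ^ (k - 1) * z * ∏ j, x j) :
    (∀ r : ℕ, 1 ≤ r → r ≤ n - 1 →
        eAInt ℂ n k z (r : ℤ) (betheVec n k x) = hC x (r : ℤ) • betheVec n k x) ∧
    (∀ σ : PartBox (n - 1) k,
        sAOp ℂ n k z σ (betheVec n k x) =
          schurC x (transpGen (partVal σ) k) • betheVec n k x) := by
  obtain ⟨K, rfl⟩ : ∃ K, k = K + 1 := ⟨k - 1, by omega⟩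
  have hb : ∀ i, x i ^ (n + (K + 1)) = (-1) ^ K * z * ∏ j, x j := by
    intro i
    rw [hbae i, Nat.add_sub_cancel]
  exact ⟨fun r h1 h2 => eig_mid n K hn z x hx0 hxd hb r h1 h2,
    fun σ => part_two n K hn z x hx0 hxd hb σ⟩
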